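/- Let (ν_J)_{J∈ℤ} be a modular invariant spectrum. Fix δ > 0, γ ∈ [0, 1/4) and h* > 0, and for an integer J ≥ 2 let N(J) := ν_J((h* − δ·J^{−γ}, h* + δ·J^{−γ})). Then lim_{J→∞} √2 · J^{1/2+γ} · e^{−4π√(A·J)} · N(J) exists and equals ∫_{h*−δ}^{h*+δ} ρ_c(h) dh when γ = 0, and equals 2δ·ρ_c(h*) when 0 < γ < 1/4. -/

import Mathlib

open MeasureTheory Filter Topology Real

noncomputable section

/-- A spectrum: a family of positive Borel measures on `ℝ`, each supported in
`{h | Tgap < h ∧ Tgap < h + J}`, with finite total Laplace-type sum. -/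
def IsSpectrum (Tgap : ℝ) (ν : ℤ → Measure ℝ) : Prop :=
  (∀ J : ℤ, ν J {h : ℝ | ¬ (Tgap < h ∧ Tgap < h + (J : ℝ))} = 0) ∧
  (∀ b b' : ℝ, 0 < b → 0 < b' →
    (∑' J : ℤ, ∫⁻ h : ℝ, ENNReal.ofReal (Real.exp (-b * h - b' * (h + (J : ℝ)))) ∂(ν J)) < ⊤)

/-- The reduced (Virasoro primary) partition function. -/
def Ztilde (A : ℝ) (ν : ℤ → Measure ℝ) (βL βR : ℂ) : ℂ :=
  Complex.exp ((A : ℂ) * (βL + βR)) *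
    ((1 - Complex.exp (-βL)) * (1 - Complex.exp (-βR)) +
      ∑' J : ℤ, ∫ h : ℝ, Complex.exp (-βL * (h : ℂ) - βR * ((h : ℂ) + (J : ℂ))) ∂(ν J))

/-- Modular invariance of the reduced partition function (principal square root). -/
def ModularInvariant (A : ℝ) (ν : ℤ → Measure ℝ) : Prop :=
  ∀ βL βR : ℂ, 0 < βL.re → 0 < βR.re →
    Ztilde A ν βL βR =
      ((4 * (π : ℂ) ^ 2) / (βL * βR)) ^ ((1 : ℂ) / 2) *
        Ztilde A ν (4 * (π : ℂ) ^ 2 / βL) (4 * (π : ℂ) ^ 2 / βR)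

/-- The crossed-channel density `ρ_c(h)`; for `0 < A < 1` the second `cosh` is a `cos`. -/
def rhoc (A : ℝ) (h : ℝ) : ℝ :=
  if h ≤ A then 0
  else Real.sqrt (2 / (h - A)) *
    (Real.cosh (4 * π * Real.sqrt (A * (h - A))) -
      (if 1 ≤ A then Real.cosh (4 * π * Real.sqrt ((A - 1) * (h - A)))
       else Real.cos (4 * π * Real.sqrt ((1 - A) * (h - A)))))

/-!
Fix `βL + βR = s`. The mean over one period in `im βR` of `e^{βR J}` times the partition function
isolates the spin `J` and gives the Laplace transform of `ν J` at `s`. By modular invariance the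
integrand is the dual-channel vacuum plus a remainder, which the gap `Tgap > 0` makes exponentially
smaller. On the contour `re βR = 2π√(A / J)` the vacuum term is evaluated by the saddle-point
method: it grows like `e^{4π√(A J)} J^{-1/2}`, and its coefficient as a function of `s` is the
Laplace transform of `ρ_c`.

On the line `re s = 2` these transforms are characteristic functions of the finite measures
`e^{-2h} ν J`. The counting in a window of width `J^{-γ}` is read off by testing against Gaussians
of that width. Such a Gaussian only sees frequencies `w` of order `J^γ`. The relative error in the
saddle-point asymptotics is `e^{O(w²) - c√J}`, which is small at these frequencies because
`γ < 1/4`, so the asymptotics may be integrated over `w` by dominated convergence. Hence the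
rescaled measures converge weakly, to a limit without atoms, and the portmanteau theorem gives the
windows.
-/

/-! ### Weak convergence -/

section WeakConvergence

open scoped ENNReal NNReal BoundedContinuousFunction

lemma charFun_normalize {E : Type*} [MeasurableSpace E] [SeminormedAddCommGroup E]
    [InnerProductSpace ℝ E] {μ : FiniteMeasure E} (hμ : μ ≠ 0) (t : E) :
    charFun (μ.normalize : Measure E) t = ((μ.mass : ℝ) : ℂ)⁻¹ * charFun (μ : Measure E) t := by
  rw [μ.toMeasure_normalize_eq_of_nonzero hμ, charFun_apply, charFun_apply,
    integral_smul_nnreal_measure, NNReal.smul_def, Complex.real_smul, NNReal.coe_inv,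
    Complex.ofReal_inv]

lemma finiteMeasure_tendsto_of_tendsto_charFun {E : Type*} [NormedAddCommGroup E]
    [InnerProductSpace ℝ E] [FiniteDimensional ℝ E] [MeasurableSpace E] [BorelSpace E]
    {μ : ℕ → FiniteMeasure E} {μ₀ : FiniteMeasure E}
    (h : ∀ t, Tendsto (fun n => charFun (μ n : Measure E) t) atTop
      (𝓝 (charFun (μ₀ : Measure E) t))) :
    Tendsto μ atTop (𝓝 μ₀) := by
  have hmass_ofReal : Tendsto (fun n => ((μ n).mass : ℂ)) atTop (𝓝 μ₀.mass) := by
    simpa only [charFun_zero, measureReal_def] using! h 0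
  have hmass : Tendsto (fun n => (μ n).mass) atTop (𝓝 μ₀.mass) := by
    simpa [Function.comp_def] using (Complex.continuous_re.tendsto _).comp hmass_ofReal
  by_cases hμ₀ : μ₀ = 0
  · rw [hμ₀] at hmass ⊢
    exact FiniteMeasure.tendsto_zero_of_tendsto_zero_mass (by simpa using hmass)
  have hmass₀ : μ₀.mass ≠ 0 := μ₀.mass_nonzero_iff.mpr hμ₀
  refine (FiniteMeasure.tendsto_normalize_iff_tendsto hμ₀).mp ⟨?_, hmass⟩
  refine ProbabilityMeasure.tendsto_iff_tendsto_charFun.mpr fun t => ?_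
  rw [charFun_normalize hμ₀]
  refine ((hmass_ofReal.inv₀ (by exact_mod_cast hmass₀)).mul (h t)).congr' ?_
  filter_upwards [hmass.eventually_ne hmass₀] with n hn
  exact (charFun_normalize ((μ n).mass_nonzero_iff.mp hn) t).symm

variable {Ω ι : Type*} [MeasurableSpace Ω] {l : Filter ι} {μ : ι → FiniteMeasure Ω}

lemma tendsto_setIntegral_zero_of_tendstoUniformlyOn {E : Type*} [NormedAddCommGroup E]
    [NormedSpace ℝ E] {m : ℝ≥0} (hmass : Tendsto (fun i => (μ i).mass) l (𝓝 m)) {s : Set Ω}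
    {f : ι → Ω → E} (hf : TendstoUniformlyOn f 0 l s) :
    Tendsto (fun i => ∫ x in s, f i x ∂(μ i : Measure Ω)) l (𝓝 0) := by
  have hbounded : ∀ᶠ i in l, ((μ i s : ℝ≥0) : ℝ) < m + 1 := by
    filter_upwards [hmass.eventually_lt_const (lt_add_one m)] with i hi
    exact_mod_cast ((μ i).apply_le_mass s).trans_lt hi
  refine Metric.tendsto_nhds.mpr fun ε hε => ?_
  have hm : 0 < (m : ℝ) + 1 := by positivity
  filter_upwards [hbounded, Metric.tendstoUniformlyOn_iff.mp hf _ (div_pos hε hm)] with i hi hfi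
  rw [dist_zero_right]
  calc ‖∫ x in s, f i x ∂(μ i : Measure Ω)‖
      ≤ ε / (m + 1) * (μ i s : ℝ≥0) :=
        norm_setIntegral_le_of_norm_le_const (measure_lt_top _ _) fun x hx => by
          simpa using (hfi x hx).le
    _ < ε / (m + 1) * (m + 1) := by gcongr
    _ = ε := div_mul_cancel₀ _ hm.ne'

variable [TopologicalSpace Ω] [OpensMeasurableSpace Ω] [HasOuterApproxClosed Ω]
  {μ₀ : FiniteMeasure Ω}

lemma finiteMeasure_tendsto_measure_of_null_frontier (h : Tendsto μ l (𝓝 μ₀)) {E : Set Ω}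
    (hE : μ₀ (frontier E) = 0) : Tendsto (fun i => μ i E) l (𝓝 (μ₀ E)) := by
  rcases isEmpty_or_nonempty Ω with _ | _
  · simpa [Set.eq_empty_of_isEmpty E, FiniteMeasure.coeFn_def] using tendsto_const_nhds
  by_cases hμ₀ : μ₀ = 0
  · have hmass : Tendsto (fun i => (μ i).mass) l (𝓝 0) := by simpa [hμ₀] using h.mass
    simpa [hμ₀] using tendsto_of_tendsto_of_tendsto_of_le_of_le tendsto_const_nhds hmass
      (fun _ => zero_le) (fun i => (μ i).apply_le_mass E)
  · have hE' : μ₀.normalize (frontier E) = 0 := by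
      rw [μ₀.normalize_eq_of_nonzero hμ₀, hE, mul_zero]
    simpa only [← FiniteMeasure.self_eq_mass_mul_normalize] using
      h.mass.mul (ProbabilityMeasure.tendsto_measure_of_null_frontier_of_tendsto
        (FiniteMeasure.tendsto_normalize_of_tendsto h hμ₀) hE')

-- Apply the portmanteau theorem to the measures `f • μ i`, for each test function `f`.
lemma finiteMeasure_tendsto_restrict_of_null_frontier (h : Tendsto μ l (𝓝 μ₀)) {E : Set Ω}
    (hEm : MeasurableSet E) (hE : μ₀ (frontier E) = 0) :
    Tendsto (fun i => (μ i).restrict E) l (𝓝 (μ₀.restrict E)) := by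
  refine FiniteMeasure.tendsto_iff_forall_lintegral_tendsto.mpr fun f => ?_
  have hf : Measurable fun x => (f x : ℝ≥0∞) := f.continuous.measurable.coe_nnreal_ennreal
  let fμ (η : FiniteMeasure Ω) : FiniteMeasure Ω := ⟨(η : Measure Ω).withDensity fun x => f x,
    isFiniteMeasure_withDensity (f.lintegral_lt_top_of_nnreal _).ne⟩
  have hfμ : Tendsto (fun i => fμ (μ i)) l (𝓝 (fμ μ₀)) := by
    rw [FiniteMeasure.tendsto_iff_forall_lintegral_tendsto] at h ⊢
    intro g
    have hg : Measurable fun x => (g x : ℝ≥0∞) := g.continuous.measurable.coe_nnreal_ennreal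
    simpa [fμ, lintegral_withDensity_eq_lintegral_mul _ hf hg] using h (f * g)
  have hfE : fμ μ₀ (frontier E) = 0 := by
    rw [FiniteMeasure.null_iff_toMeasure_null] at hE ⊢
    exact withDensity_absolutelyContinuous _ _ hE
  have hwindow := finiteMeasure_tendsto_measure_of_null_frontier hfμ hfE
  have happly (η : FiniteMeasure Ω) :
      (fμ η E : ℝ≥0∞) = ∫⁻ x, f x ∂(η.restrict E : Measure Ω) := by
    rw [FiniteMeasure.ennreal_coeFn_eq_coeFn_toMeasure]
    exact withDensity_apply _ hEm
  simpa only [Function.comp_def, happly] using (ENNReal.continuous_coe.tendsto _).comp hwindow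

lemma tendsto_setIntegral_Ioo_of_tendstoUniformlyOn {κ : ι → FiniteMeasure ℝ}
    {κ₀ : FiniteMeasure ℝ} (h : Tendsto κ l (𝓝 κ₀)) {a b : ℝ} (hab : a < b)
    (hnull : κ₀ {a, b} = 0) {φ : ι → ℝ → ℝ} {φ₀ : ℝ → ℝ} (hφ : ∀ i, Continuous (φ i))
    (hφ₀ : Continuous φ₀) (hunif : TendstoUniformlyOn φ φ₀ l (Set.Icc a b)) :
    Tendsto (fun i => ∫ y in Set.Ioo a b, φ i y ∂(κ i : Measure ℝ)) l
      (𝓝 (∫ y in Set.Ioo a b, φ₀ y ∂(κ₀ : Measure ℝ))) := by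
  have hrestrict := finiteMeasure_tendsto_restrict_of_null_frontier h measurableSet_Ioo
    (E := Set.Ioo a b) (by rwa [frontier_Ioo hab])
  have hfixed : Tendsto (fun i => ∫ y in Set.Ioo a b, φ₀ y ∂(κ i : Measure ℝ)) l
      (𝓝 (∫ y in Set.Ioo a b, φ₀ y ∂(κ₀ : Measure ℝ))) := by
    let clipped : ℝ →ᵇ ℝ := (BoundedContinuousFunction.mkOfCompact
      ⟨fun y : Set.Icc a b => φ₀ y, by fun_prop⟩).compContinuous
        ⟨Set.projIcc a b hab.le, continuous_projIcc⟩
    have hclip (η : FiniteMeasure ℝ) : ∫ y in Set.Ioo a b, φ₀ y ∂(η : Measure ℝ) =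
        ∫ y, clipped y ∂(η.restrict (Set.Ioo a b) : Measure ℝ) :=
      setIntegral_congr_fun measurableSet_Ioo fun y hy => by
        simp [clipped, Set.projIcc_of_mem hab.le (Set.Ioo_subset_Icc_self hy)]
    simpa only [hclip] using FiniteMeasure.tendsto_iff_forall_integral_tendsto.mp hrestrict clipped
  have hint (η : FiniteMeasure ℝ) {f : ℝ → ℝ} (hf : Continuous f) :
      IntegrableOn f (Set.Ioo a b) (η : Measure ℝ) :=
    hf.integrableOn_Icc.mono_set Set.Ioo_subset_Icc_self
  have hdiff : Tendsto (fun i => ∫ y in Set.Ioo a b, (φ i y - φ₀ y) ∂(κ i : Measure ℝ)) l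
      (𝓝 0) := by
    refine tendsto_setIntegral_zero_of_tendstoUniformlyOn h.mass ?_
    refine Metric.tendstoUniformlyOn_iff.mpr fun ε hε => ?_
    filter_upwards [Metric.tendstoUniformlyOn_iff.mp hunif ε hε] with i hi y hy
    simpa [dist_eq_norm, norm_sub_rev] using hi y (Set.Ioo_subset_Icc_self hy)
  simpa [integral_sub (hint _ (hφ _)) (hint _ hφ₀)] using hfixed.add hdiff

end WeakConvergence

section GaussianWindows

lemma integral_withDensity_ofReal {Ω E : Type*} [MeasurableSpace Ω] [NormedAddCommGroup E]
    [NormedSpace ℝ E] (μ : Measure Ω) {f : Ω → ℝ} (hf : Measurable f) (hf₀ : ∀ x, 0 ≤ f x)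
    (F : Ω → E) :
    ∫ x, F x ∂μ.withDensity (fun x => ENNReal.ofReal (f x)) = ∫ x, f x • F x ∂μ := by
  rw [integral_withDensity_eq_integral_toReal_smul hf.ennreal_ofReal
    (ae_of_all _ fun _ => ENNReal.ofReal_lt_top)]
  simp only [ENNReal.toReal_ofReal (hf₀ _)]

lemma setIntegral_withDensity_ofReal {Ω E : Type*} [MeasurableSpace Ω] [NormedAddCommGroup E]
    [NormedSpace ℝ E] (μ : Measure Ω) {f : Ω → ℝ} (hf : Measurable f) (hf₀ : ∀ x, 0 ≤ f x)
    (F : Ω → E) {S : Set Ω} (hS : MeasurableSet S) :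
    ∫ x in S, F x ∂μ.withDensity (fun x => ENNReal.ofReal (f x)) = ∫ x in S, f x • F x ∂μ := by
  rw [restrict_withDensity hS, integral_withDensity_ofReal _ hf hf₀]

lemma integral_gaussian_mul_cexp (t : ℝ) :
    ∫ y : ℝ, (exp (-y ^ 2 / 2) : ℂ) * Complex.exp (t * y * Complex.I) =
      √(2 * π) * exp (-t ^ 2 / 2) := by
  have h := fourierIntegral_gaussian (b := 1 / 2) (by norm_num) (t : ℂ)
  have hsqrt : ((π : ℂ) / (1 / 2)) ^ (1 / 2 : ℂ) = (√(2 * π) : ℝ) := by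
    rw [sqrt_eq_rpow, Complex.ofReal_cpow (by positivity)]
    push_cast
    ring_nf
  rw [hsqrt] at h
  convert h using 2
  · ext y
    push_cast
    rw [← Complex.exp_add, ← Complex.exp_add]
    ring_nf
  · push_cast
    ring_nf

lemma integrable_exp_neg_sq_div_two : Integrable fun y : ℝ => exp (-y ^ 2 / 2) := by
  simpa [neg_mul, div_eq_inv_mul] using integrable_exp_neg_mul_sq (b := 1 / 2) (by norm_num)

lemma integrable_exp_neg_affine_sq_div_two {s : ℝ} (hs : s ≠ 0) (ξ : ℝ) :
    Integrable fun w : ℝ => exp (-(w * s - ξ) ^ 2 / 2) :=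
  (integrable_exp_neg_sq_div_two.comp_sub_right ξ).comp_mul_right' hs

lemma integral_affine_gaussian_mul_cexp {s : ℝ} (hs : 0 < s) (ξ v : ℝ) :
    ∫ w : ℝ, (exp (-(w * s - ξ) ^ 2 / 2) : ℂ) * Complex.exp (w * v * Complex.I) =
      √(2 * π) / s * exp (-(v / s) ^ 2 / 2) * Complex.exp (ξ * (v / s : ℝ) * Complex.I) := by
  let G (u : ℝ) : ℂ := exp (-(u - ξ) ^ 2 / 2) * Complex.exp (u * (v / s : ℝ) * Complex.I)
  have hs' : (s : ℂ) ≠ 0 := by exact_mod_cast hs.ne'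
  calc ∫ w : ℝ, (exp (-(w * s - ξ) ^ 2 / 2) : ℂ) * Complex.exp (w * v * Complex.I)
      = ∫ w, G (w * s) := by
        congr! 4 with w
        push_cast
        field_simp
    _ = (s : ℂ)⁻¹ * ∫ u, G u := by
      rw [Measure.integral_comp_mul_right, abs_of_pos (inv_pos.mpr hs), Complex.real_smul,
        Complex.ofReal_inv]
    _ = (s : ℂ)⁻¹ * ∫ u, G (u + ξ) := by rw [integral_add_right_eq_self]
    _ = (s : ℂ)⁻¹ * ∫ u : ℝ, (exp (-u ^ 2 / 2) : ℂ) *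
          Complex.exp ((v / s : ℝ) * u * Complex.I) *
            Complex.exp (ξ * (v / s : ℝ) * Complex.I) := by
      congr! 3 with u
      rw [mul_assoc, ← Complex.exp_add]
      simp only [G, add_sub_cancel_right]
      congr 2
      push_cast
      ring
    _ = _ := by
      rw [integral_mul_const, integral_gaussian_mul_cexp]
      ring

/-- The finite measure `ρ` viewed near `x` at scale `s`: the image of `c / s` times the Gaussian
damping of `ρ` under `h ↦ (h - x) / s`. The damping makes its characteristic function a Gaussian
average of the one of `ρ`, so it can be controlled frequency by frequency. -/
def gaussianWindow (ρ : Measure ℝ) (c s x : ℝ) : Measure ℝ :=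
  (ρ.withDensity fun h => ENNReal.ofReal (c / s * exp (-((h - x) / s) ^ 2 / 2))).map
    fun h => (h - x) / s

variable {ρ : Measure ℝ} {c s : ℝ}

instance isFiniteMeasure_gaussianWindow [IsFiniteMeasure ρ] (c s x : ℝ) :
    IsFiniteMeasure (gaussianWindow ρ c s x) := by
  have hbound (h : ℝ) : ‖c / s * exp (-((h - x) / s) ^ 2 / 2)‖ ≤ |c / s| := by
    rw [norm_mul, norm_of_nonneg (exp_pos _).le]
    refine mul_le_of_le_one_right (abs_nonneg _) (exp_le_one_iff.mpr ?_)
    linarith [sq_nonneg ((h - x) / s)]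
  have hint : Integrable (fun h => c / s * exp (-((h - x) / s) ^ 2 / 2)) ρ :=
    .of_bound (by fun_prop) _ (ae_of_all _ hbound)
  have := isFiniteMeasure_withDensity_ofReal hint.2
  unfold gaussianWindow
  infer_instance

lemma setIntegral_gaussianWindow {E : Type*} [NormedAddCommGroup E] [NormedSpace ℝ E]
    (hc : 0 ≤ c) (hs : 0 < s) (x : ℝ) (F : ℝ → E) {S : Set ℝ} (hS : MeasurableSet S) :
    ∫ y in S, F y ∂gaussianWindow ρ c s x = ∫ h in (fun h => (h - x) / s) ⁻¹' S,
      (c / s * exp (-((h - x) / s) ^ 2 / 2)) • F ((h - x) / s) ∂ρ := by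
  have hemb : MeasurableEmbedding fun h : ℝ => (h - x) / s :=
    ((Homeomorph.subRight x).trans
      (Homeomorph.mulRight₀ s⁻¹ (inv_ne_zero hs.ne'))).measurableEmbedding
  rw [gaussianWindow, hemb.setIntegral_map,
    setIntegral_withDensity_ofReal _ (by fun_prop) (fun h => by positivity) _
      (hemb.measurable hS)]

lemma setIntegral_Ioo_gaussianWindow (hc : 0 ≤ c) (hs : 0 < s) (x δ : ℝ) (ψ : ℝ → ℝ) :
    ∫ y in Set.Ioo (-δ) δ, exp (y ^ 2 / 2) * ψ (x + s * y) ∂gaussianWindow ρ c s x =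
      c / s * ∫ h in Set.Ioo (x - δ * s) (x + δ * s), ψ h ∂ρ := by
  have hpre : (fun h => (h - x) / s) ⁻¹' Set.Ioo (-δ) δ = Set.Ioo (x - δ * s) (x + δ * s) := by
    ext h
    simp only [Set.mem_preimage, Set.mem_Ioo, lt_div_iff₀ hs, div_lt_iff₀ hs]
    constructor <;> rintro ⟨hl, hr⟩ <;> constructor <;> linarith
  rw [setIntegral_gaussianWindow hc hs x _ measurableSet_Ioo, hpre, ← integral_const_mul]
  congr! 1
  ext h
  have hcancel : exp (-((h - x) / s) ^ 2 / 2) * exp (((h - x) / s) ^ 2 / 2) = 1 := by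
    rw [← exp_add, ← exp_zero]
    ring_nf
  rw [mul_div_cancel₀ _ hs.ne', add_sub_cancel, smul_eq_mul]
  linear_combination (c / s * ψ h) * hcancel

lemma charFun_gaussianWindow [IsFiniteMeasure ρ] (hc : 0 ≤ c) (hs : 0 < s) (x ξ : ℝ) :
    charFun (gaussianWindow ρ c s x) ξ = (√(2 * π) : ℂ)⁻¹ *
      ∫ w : ℝ, (exp (-(w * s - ξ) ^ 2 / 2) : ℂ) *
        (Complex.exp (-(w * x * Complex.I)) * (c * charFun ρ w)) := by
  let K (h w : ℝ) : ℂ := exp (-(w * s - ξ) ^ 2 / 2) * Complex.exp (w * (h - x) * Complex.I)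
  have hK (h : ℝ) : (c / s * exp (-((h - x) / s) ^ 2 / 2)) •
      Complex.exp (ξ * ((h - x) / s : ℝ) * Complex.I) = (√(2 * π) : ℂ)⁻¹ * c * ∫ w, K h w := by
    have hsqrt : (√(2 * π) : ℂ) ≠ 0 := by
      exact_mod_cast (sqrt_pos.mpr (by positivity : (0 : ℝ) < 2 * π)).ne'
    simp only [K, ← Complex.ofReal_sub, integral_affine_gaussian_mul_cexp hs, Complex.real_smul]
    push_cast
    field_simp
  have hint : Integrable (Function.uncurry K) (ρ.prod volume) := by
    refine ((integrable_const (1 : ℝ)).mul_prod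
      (integrable_exp_neg_affine_sq_div_two hs.ne' ξ)).mono'
      (by dsimp only [Function.uncurry_def, K]; fun_prop) (ae_of_all _ fun p => ?_)
    simp [Function.uncurry, K, Complex.norm_exp, -Complex.ofReal_exp]
  calc charFun (gaussianWindow ρ c s x) ξ
      = ∫ h, (√(2 * π) : ℂ)⁻¹ * c * (∫ w, K h w) ∂ρ := by
        rw [charFun_apply_real, ← setIntegral_univ,
          setIntegral_gaussianWindow hc hs x _ MeasurableSet.univ]
        simp only [Set.preimage_univ, setIntegral_univ, hK]
    _ = (√(2 * π) : ℂ)⁻¹ * ∫ w, ∫ h, c * K h w ∂ρ := by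
        rw [integral_const_mul, integral_integral_swap hint, mul_assoc, ← integral_const_mul]
        simp only [integral_const_mul]
    _ = _ := by
        congr! 3 with w
        have hsplit (h : ℝ) : Complex.exp (w * (h - x) * Complex.I) =
            Complex.exp (-(w * x * Complex.I)) * Complex.exp (w * h * Complex.I) := by
          rw [← Complex.exp_add]
          ring_nf
        simp only [K, hsplit, integral_const_mul, charFun_apply_real]
        ring

end GaussianWindows

section LocalLimit

open FourierTransform in
lemma integral_cexp_neg_mul_of_integral_cexp_mul {f φ : ℝ → ℂ} (hf : Continuous f)
    (hfi : Integrable f) (hφ : ∀ w : ℝ, φ w = ∫ h : ℝ, Complex.exp (w * h * Complex.I) * f h)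
    (hφi : Integrable φ) (x : ℝ) :
    ∫ w : ℝ, Complex.exp (-(w * x * Complex.I)) * φ w = 2 * π * f x := by
  have hF : 𝓕 f = fun v => φ (-(2 * π) * v) := by
    ext v
    rw [Real.fourier_real_eq_integral_exp_smul, hφ]
    congr! 4 with h
    push_cast
    ring
  have hFi : Integrable (𝓕 f) := by
    rw [hF]
    exact hφi.comp_mul_left' (by simp [pi_ne_zero])
  let G (w : ℝ) : ℂ := Complex.exp (-(w * x * Complex.I)) * φ w
  have hinv : ∫ v : ℝ, G (-(2 * π) * v) = f x := by
    rw [← congrFun (hf.fourierInv_fourier_eq hfi hFi) x, Real.fourierInv_eq', hF]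
    congr! 1
    ext v
    simp only [G, smul_eq_mul]
    congr 2
    simp
    ring
  rw [Measure.integral_comp_mul_left, abs_inv, abs_neg, abs_of_pos two_pi_pos,
    Complex.real_smul, Complex.ofReal_inv] at hinv
  have hpi : ((2 * π : ℝ) : ℂ) ≠ 0 := by exact_mod_cast two_pi_pos.ne'
  rw [← hinv, ← Complex.ofReal_ofNat, ← Complex.ofReal_mul, mul_inv_cancel_left₀ hpi]

lemma integral_gaussian_mul_comp_affine_mul_cexp {f φ : ℝ → ℂ} (hφi : Integrable φ)
    (hinv : ∀ x : ℝ, ∫ w : ℝ, Complex.exp (-(w * x * Complex.I)) * φ w = 2 * π * f x)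
    (x ε ξ : ℝ) :
    ∫ y : ℝ, (exp (-y ^ 2 / 2) : ℂ) * f (x + ε * y) * Complex.exp (ξ * y * Complex.I) =
      (√(2 * π) : ℂ)⁻¹ * ∫ w : ℝ, (exp (-(w * ε - ξ) ^ 2 / 2) : ℂ) *
        (Complex.exp (-(w * x * Complex.I)) * φ w) := by
  let K (y w : ℝ) : ℂ := exp (-y ^ 2 / 2) * Complex.exp ((ξ - w * ε : ℝ) * y * Complex.I) *
    (Complex.exp (-(w * x * Complex.I)) * φ w)
  have hpi : (2 * π : ℂ) ≠ 0 := by exact_mod_cast two_pi_pos.ne'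
  have hsqrt : (√(2 * π) : ℂ) ^ 2 = 2 * π := by
    rw [← Complex.ofReal_pow, sq_sqrt two_pi_pos.le]
    push_cast
    rfl
  have hsqrt₀ : (√(2 * π) : ℂ) ≠ 0 := fun h => hpi (by rw [← hsqrt, h]; simp)
  have hint : Integrable (Function.uncurry K) := by
    refine (integrable_exp_neg_sq_div_two.mul_prod hφi.norm).mono' ?_ (ae_of_all _ fun p => ?_)
    · have hφm : AEStronglyMeasurable (fun p : ℝ × ℝ => φ p.2) (volume.prod volume) :=
        hφi.aestronglyMeasurable.comp_snd
      exact (Continuous.aestronglyMeasurable (by fun_prop)).mul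
        ((Continuous.aestronglyMeasurable (by fun_prop)).mul hφm)
    · simp [Function.uncurry, K, Complex.norm_exp, -Complex.ofReal_exp]
  calc ∫ y : ℝ, (exp (-y ^ 2 / 2) : ℂ) * f (x + ε * y) * Complex.exp (ξ * y * Complex.I)
      = ∫ y, (2 * π : ℂ)⁻¹ * ∫ w, K y w := by
        congr! 2 with y
        rw [eq_inv_mul_iff_mul_eq₀ hpi]
        trans exp (-y ^ 2 / 2) * Complex.exp (ξ * y * Complex.I) * (2 * π * f (x + ε * y))
        · ring
        rw [← hinv, ← integral_const_mul]
        congr 1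
        ext w
        have hexp : Complex.exp (ξ * y * Complex.I) *
            Complex.exp (-(w * ((x + ε * y : ℝ) : ℂ) * Complex.I)) =
            Complex.exp ((ξ - w * ε : ℝ) * y * Complex.I) *
              Complex.exp (-(w * x * Complex.I)) := by
          rw [← Complex.exp_add, ← Complex.exp_add]
          push_cast
          ring_nf
        linear_combination (exp (-y ^ 2 / 2) * φ w) * hexp
    _ = (2 * π : ℂ)⁻¹ * ∫ w, ∫ y, K y w := by
        rw [integral_const_mul, integral_integral_swap hint]
    _ = _ := by
        simp only [K, integral_mul_const, integral_gaussian_mul_cexp]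
        simp only [mul_assoc (√(2 * π) : ℂ), integral_const_mul]
        rw [← hsqrt, pow_two, mul_inv, mul_assoc, inv_mul_cancel_left₀ hsqrt₀]
        simp only [← neg_sub (_ * ε) ξ, neg_sq]

lemma bounded_of_integral_cexp_neg_mul {f φ : ℝ → ℂ}
    (hinv : ∀ x : ℝ, ∫ w : ℝ, Complex.exp (-(w * x * Complex.I)) * φ w = 2 * π * f x) (x : ℝ) :
    ‖f x‖ ≤ (2 * π)⁻¹ * ∫ w, ‖φ w‖ := by
  rw [le_inv_mul_iff₀ two_pi_pos]
  calc 2 * π * ‖f x‖ = ‖∫ w : ℝ, Complex.exp (-(w * x * Complex.I)) * φ w‖ := by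
        simp [hinv, abs_of_pos pi_pos]
    _ ≤ ∫ w : ℝ, ‖Complex.exp (-(w * x * Complex.I)) * φ w‖ := norm_integral_le_integral_norm _
    _ = ∫ w, ‖φ w‖ := by simp [Complex.norm_exp]

lemma tendstoUniformlyOn_comp_affine {ψ : ℝ → ℝ} (hψ : Continuous ψ) {ι : Type*} {l : Filter ι}
    {s : ι → ℝ} {ε : ℝ} (hs : Tendsto s l (𝓝 ε)) (x a b : ℝ) :
    TendstoUniformlyOn (fun i y => exp (y ^ 2 / 2) * ψ (x + s i * y))
      (fun y => exp (y ^ 2 / 2) * ψ (x + ε * y)) l (Set.Icc a b) := by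
  rw [tendstoUniformlyOn_iff_tendstoUniformly_comp_coe]
  have h := Continuous.tendstoUniformly
    (fun (σ : ℝ) (y : Set.Icc a b) => exp ((y : ℝ) ^ 2 / 2) * ψ (x + σ * y))
    (by dsimp only [Function.HasUncurry.uncurry, id]; fun_prop) ε
  exact fun u hu => hs.eventually (h u hu)

lemma setIntegral_withDensity_gaussian_mul {g : ℝ → ℝ} (hg : Measurable g) (hg₀ : ∀ y, 0 ≤ g y)
    (F : ℝ → ℝ) {S : Set ℝ} (hS : MeasurableSet S) :
    ∫ y in S, exp (y ^ 2 / 2) * F y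
        ∂volume.withDensity (fun y => ENNReal.ofReal (exp (-y ^ 2 / 2) * g y)) =
      ∫ y in S, F y * g y := by
  rw [setIntegral_withDensity_ofReal _ (by fun_prop)
    (fun y => mul_nonneg (exp_pos _).le (hg₀ y)) _ hS]
  congr 1
  ext y
  have hcancel : exp (-y ^ 2 / 2) * exp (y ^ 2 / 2) = 1 := by rw [← exp_add]; ring_nf; simp
  rw [smul_eq_mul]
  linear_combination (F y * g y) * hcancel

variable {ρ : ℕ → Measure ℝ} [∀ n, IsFiniteMeasure (ρ n)] {c s : ℕ → ℝ} {ε : ℝ} {φ : ℝ → ℂ}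

lemma tendsto_charFun_gaussianWindow (hc : ∀ n, 0 ≤ c n) (hs : ∀ᶠ n in atTop, 0 < s n)
    (hsε : Tendsto s atTop (𝓝 ε))
    (hlim : ∀ w, Tendsto (fun n => c n * charFun (ρ n) w) atTop (𝓝 (φ w)))
    {ξ : ℝ} {bound : ℝ → ℝ} (hbound : Integrable bound)
    (hdom : ∀ᶠ n in atTop, ∀ w : ℝ,
      exp (-(w * s n - ξ) ^ 2 / 2) * ‖c n * charFun (ρ n) w‖ ≤ bound w) (x : ℝ) :
    Tendsto (fun n => charFun (gaussianWindow (ρ n) (c n) (s n) x) ξ) atTop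
      (𝓝 ((√(2 * π) : ℂ)⁻¹ * ∫ w : ℝ, (exp (-(w * ε - ξ) ^ 2 / 2) : ℂ) *
        (Complex.exp (-(w * x * Complex.I)) * φ w))) := by
  refine Tendsto.congr' ?_ (Tendsto.const_mul _ (tendsto_integral_filter_of_dominated_convergence
    bound (F := fun n w => (exp (-(w * s n - ξ) ^ 2 / 2) : ℂ) *
      (Complex.exp (-(w * x * Complex.I)) * (c n * charFun (ρ n) w))) ?_ ?_ hbound ?_))
  · filter_upwards [hs] with n hn using (charFun_gaussianWindow (hc n) hn x ξ).symm
  · refine Eventually.of_forall fun n => Continuous.aestronglyMeasurable ?_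
    have := continuous_charFun (μ := ρ n)
    fun_prop
  · filter_upwards [hdom] with n hn
    refine ae_of_all _ fun w => ?_
    simpa [Complex.norm_exp, -Complex.ofReal_exp] using hn w
  · refine ae_of_all _ fun w => Tendsto.mul ?_ ((hlim w).const_mul _)
    exact ((by fun_prop : Continuous fun σ => (exp (-(w * σ - ξ) ^ 2 / 2) : ℂ)).tendsto ε).comp hsε

theorem tendsto_setIntegral_window (hc : ∀ n, 0 ≤ c n) (hs : ∀ᶠ n in atTop, 0 < s n)
    (hsε : Tendsto s atTop (𝓝 ε)) {f : ℝ → ℝ} (hf : Continuous f) (hf₀ : ∀ h, 0 ≤ f h)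
    (hfi : Integrable f)
    (hφ : ∀ w : ℝ, φ w = ∫ h : ℝ, Complex.exp (w * h * Complex.I) * f h) (hφi : Integrable φ)
    (hlim : ∀ w, Tendsto (fun n => c n * charFun (ρ n) w) atTop (𝓝 (φ w)))
    (hdom : ∀ ξ : ℝ, ∃ bound : ℝ → ℝ, Integrable bound ∧ ∀ᶠ n in atTop, ∀ w : ℝ,
      exp (-(w * s n - ξ) ^ 2 / 2) * ‖c n * charFun (ρ n) w‖ ≤ bound w)
    {ψ : ℝ → ℝ} (hψ : Continuous ψ) (x : ℝ) {δ : ℝ} (hδ : 0 < δ) :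
    Tendsto (fun n => c n / s n * ∫ h in Set.Ioo (x - δ * s n) (x + δ * s n), ψ h ∂ρ n) atTop
      (𝓝 (∫ y in -δ..δ, ψ (x + ε * y) * f (x + ε * y))) := by
  have hinv := integral_cexp_neg_mul_of_integral_cexp_mul (f := fun h => (f h : ℂ)) (by fun_prop)
    hfi.ofReal hφ hφi
  let d (y : ℝ) : ℝ := exp (-y ^ 2 / 2) * f (x + ε * y)
  have hd₀ (y : ℝ) : 0 ≤ d y := mul_nonneg (exp_pos _).le (hf₀ _)
  have hdc : Continuous d := by fun_prop
  have hdi : Integrable d := integrable_exp_neg_sq_div_two.mul_bdd (by fun_prop)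
    (ae_of_all _ fun y => by simpa using bounded_of_integral_cexp_neg_mul hinv (x + ε * y))
  let κ (n : ℕ) : FiniteMeasure ℝ := ⟨gaussianWindow (ρ n) (c n) (s n) x, inferInstance⟩
  let κ₀ : FiniteMeasure ℝ := ⟨volume.withDensity fun y => ENNReal.ofReal (d y),
    isFiniteMeasure_withDensity_ofReal hdi.2⟩
  have hκ : Tendsto κ atTop (𝓝 κ₀) := by
    refine finiteMeasure_tendsto_of_tendsto_charFun fun ξ => ?_
    obtain ⟨bound, hbound, hle⟩ := hdom ξ
    have hκ₀ : charFun (κ₀ : Measure ℝ) ξ =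
        ∫ y : ℝ, (exp (-y ^ 2 / 2) : ℂ) * f (x + ε * y) * Complex.exp (ξ * y * Complex.I) := by
      rw [charFun_apply_real]
      refine (integral_withDensity_ofReal _ hdc.measurable hd₀ _).trans ?_
      simp only [d, Complex.real_smul, Complex.ofReal_mul]
    rw [hκ₀, integral_gaussian_mul_comp_affine_mul_cexp hφi hinv]
    exact tendsto_charFun_gaussianWindow hc hs hsε hlim hbound hle x
  have hnull : κ₀ {-δ, δ} = 0 := by
    rw [FiniteMeasure.null_iff_toMeasure_null]
    exact withDensity_absolutelyContinuous _ _ ((Set.toFinite _).measure_zero _)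
  have hwindow := tendsto_setIntegral_Ioo_of_tendstoUniformlyOn hκ (neg_lt_self hδ) hnull
    (fun n => by fun_prop) (by fun_prop) (tendstoUniformlyOn_comp_affine hψ hsε x (-δ) δ)
  have hlimit : ∫ y in Set.Ioo (-δ) δ, exp (y ^ 2 / 2) * ψ (x + ε * y) ∂(κ₀ : Measure ℝ) =
      ∫ y in -δ..δ, ψ (x + ε * y) * f (x + ε * y) := by
    rw [intervalIntegral.integral_of_le (neg_lt_self hδ).le, integral_Ioc_eq_integral_Ioo]
    exact setIntegral_withDensity_gaussian_mul (by fun_prop) (fun y => hf₀ _) _ measurableSet_Ioo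
  rw [hlimit] at hwindow
  refine hwindow.congr' ?_
  filter_upwards [hs] with n hn using setIntegral_Ioo_gaussianWindow (hc n) hn x δ ψ

end LocalLimit

/-! ### The modular crossing equation -/

/-- The spin-`J` contribution `∫ e^{-bL h - bR (h + J)} dν_J(h)` at real inverse temperatures. -/
def boltzmannTerm (ν : ℤ → Measure ℝ) (bL bR : ℝ) (J : ℤ) : ℝ :=
  ∫ h : ℝ, exp (-bL * h - bR * (h + J)) ∂ν J

/-- The sum over all spins of the non-vacuum contributions at real inverse temperatures; it
dominates its complex analogue `spectralSum`. -/
def boltzmannSum (ν : ℤ → Measure ℝ) (bL bR : ℝ) : ℝ := ∑' J : ℤ, boltzmannTerm ν bL bR J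

/-- The spin-`J` contribution `∫ e^{-βL h - βR (h + J)} dν_J(h)` at complex inverse temperatures. -/
def spectralTerm (ν : ℤ → Measure ℝ) (βL βR : ℂ) (J : ℤ) : ℂ :=
  ∫ h : ℝ, Complex.exp (-βL * h - βR * (h + J)) ∂ν J

/-- The non-vacuum part of the reduced partition function, stripped of `e^{A(βL + βR)}`. -/
def spectralSum (ν : ℤ → Measure ℝ) (βL βR : ℂ) : ℂ := ∑' J : ℤ, spectralTerm ν βL βR J

/-- The vacuum part of the reduced partition function, stripped of `e^{A(βL + βR)}`. -/
def vacuumTerm (βL βR : ℂ) : ℂ := (1 - Complex.exp (-βL)) * (1 - Complex.exp (-βR))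

/-- The inverse temperature `4π² / β` of the dual channel. -/
def modularDual (β : ℂ) : ℂ := 4 * (π : ℂ) ^ 2 / β

/-- The factor multiplying the vacuum and spectral sums of the dual channel in the modular
crossing equation. -/
def crossingFactor (A : ℝ) (βL βR : ℂ) : ℂ :=
  (4 * (π : ℂ) ^ 2 / (βL * βR)) ^ ((1 : ℂ) / 2) *
    Complex.exp (A * (modularDual βL + modularDual βR))

lemma modularDual_re (β : ℂ) : (modularDual β).re = 4 * π ^ 2 * β.re / ‖β‖ ^ 2 := by
  have h : modularDual β = ((4 * π ^ 2 : ℝ) : ℂ) * β⁻¹ := by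
    rw [modularDual, div_eq_mul_inv]
    push_cast
    rfl
  rw [h, Complex.re_ofReal_mul, Complex.inv_re, Complex.normSq_eq_norm_sq]
  ring

lemma norm_pos_of_re_pos {β : ℂ} (h : 0 < β.re) : 0 < ‖β‖ := h.trans_le (Complex.re_le_norm β)

lemma modularDual_re_pos {β : ℂ} (h : 0 < β.re) : 0 < (modularDual β).re := by
  have := norm_pos_of_re_pos h
  rw [modularDual_re]
  positivity

lemma modularDual_re_le {β : ℂ} (h : 0 < β.re) : (modularDual β).re ≤ 4 * π ^ 2 / β.re := by
  have hnorm := norm_pos_of_re_pos h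
  have hsq : β.re ^ 2 ≤ ‖β‖ ^ 2 := by gcongr; exact Complex.re_le_norm β
  rw [modularDual_re, div_le_div_iff₀ (by positivity) h]
  nlinarith [pi_pos]

lemma four_pi_sq_div_modularDual_re {β : ℂ} (h : 0 < β.re) :
    4 * π ^ 2 / (modularDual β).re = ‖β‖ ^ 2 / β.re := by
  have := norm_pos_of_re_pos h
  rw [modularDual_re]
  field_simp

lemma norm_cpow_one_half (z : ℂ) : ‖z ^ ((1 : ℂ) / 2)‖ = √‖z‖ := by
  have h := Complex.norm_cpow_real z (1 / 2)
  push_cast at h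
  rw [h, sqrt_eq_rpow]

lemma norm_crossingFactor (A : ℝ) (βL βR : ℂ) :
    ‖crossingFactor A βL βR‖ = √(4 * π ^ 2 / (‖βL‖ * ‖βR‖)) *
      exp (A * ((modularDual βL).re + (modularDual βR).re)) := by
  rw [crossingFactor, norm_mul, norm_cpow_one_half, Complex.norm_exp, Complex.re_ofReal_mul,
    Complex.add_re]
  simp [abs_of_pos pi_pos]

lemma sqrt_le_one_add {y : ℝ} (hy : 0 ≤ y) : √y ≤ 1 + y := by
  rw [sqrt_le_left (by positivity)]
  nlinarith

lemma norm_one_sub_cexp_neg_le {u : ℂ} (hu : 0 ≤ u.re) : ‖1 - Complex.exp (-u)‖ ≤ 2 := by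
  have hexp : exp (-u.re) ≤ 1 := exp_le_one_iff.mpr (neg_nonpos.mpr hu)
  calc ‖1 - Complex.exp (-u)‖ ≤ ‖(1 : ℂ)‖ + ‖Complex.exp (-u)‖ := norm_sub_le _ _
    _ ≤ 2 := by rw [norm_one, Complex.norm_exp, Complex.neg_re]; linarith

lemma norm_vacuumTerm_le {βL βR : ℂ} (hL : 0 ≤ βL.re) (hR : 0 ≤ βR.re) :
    ‖vacuumTerm βL βR‖ ≤ 4 := by
  rw [vacuumTerm, norm_mul]
  linarith [mul_le_mul (norm_one_sub_cexp_neg_le hL) (norm_one_sub_cexp_neg_le hR)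
    (norm_nonneg _) zero_le_two]

lemma vacuumTerm_ofReal (b b' : ℝ) :
    vacuumTerm b b' = ((1 - exp (-b)) * (1 - exp (-b')) : ℝ) := by
  simp [vacuumTerm]

section

variable (ν : ℤ → Measure ℝ)

lemma boltzmannTerm_nonneg (b b' : ℝ) (J : ℤ) : 0 ≤ boltzmannTerm ν b b' J :=
  integral_nonneg fun _ => (exp_pos _).le

lemma boltzmannSum_nonneg (b b' : ℝ) : 0 ≤ boltzmannSum ν b b' :=
  tsum_nonneg fun _ => boltzmannTerm_nonneg ν _ _ _

lemma norm_spectralTerm_le (βL βR : ℂ) (J : ℤ) :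
    ‖spectralTerm ν βL βR J‖ ≤ boltzmannTerm ν βL.re βR.re J := by
  refine (norm_integral_le_integral_norm _).trans_eq ?_
  simp [boltzmannTerm, Complex.norm_exp]

lemma spectralSum_ofReal (b b' : ℝ) : spectralSum ν b b' = boltzmannSum ν b b' := by
  rw [spectralSum, boltzmannSum, Complex.ofReal_tsum]
  congr! 2 with J
  rw [spectralTerm, boltzmannTerm, ← integral_complex_ofReal]
  push_cast
  rfl

end

namespace ModularInvariant

variable {A : ℝ} {ν : ℤ → Measure ℝ}

lemma crossing (hν : ModularInvariant A ν) {βL βR : ℂ} (hL : 0 < βL.re) (hR : 0 < βR.re) :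
    Complex.exp (A * (βL + βR)) * (vacuumTerm βL βR + spectralSum ν βL βR) =
      crossingFactor A βL βR * (vacuumTerm (modularDual βL) (modularDual βR) +
        spectralSum ν (modularDual βL) (modularDual βR)) :=
  (hν βL βR hL hR).trans (mul_assoc _ _ _).symm

lemma crossing_real (hν : ModularInvariant A ν) {b b' : ℝ} (hb : 0 < b) (hb' : 0 < b') :
    exp (A * (b + b')) * ((1 - exp (-b)) * (1 - exp (-b')) + boltzmannSum ν b b') =
      √(4 * π ^ 2 / (b * b')) * exp (A * (4 * π ^ 2 / b + 4 * π ^ 2 / b')) *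
        ((1 - exp (-(4 * π ^ 2 / b))) * (1 - exp (-(4 * π ^ 2 / b'))) +
          boltzmannSum ν (4 * π ^ 2 / b) (4 * π ^ 2 / b')) := by
  have h := hν.crossing (βL := b) (βR := b') (by simpa) (by simpa)
  have hdual (x : ℝ) : modularDual x = (4 * π ^ 2 / x : ℝ) := by simp [modularDual]
  have hsqrt : (4 * (π : ℂ) ^ 2 / (b * b')) ^ ((1 : ℂ) / 2) = √(4 * π ^ 2 / (b * b')) := by
    rw [sqrt_eq_rpow, Complex.ofReal_cpow (by positivity)]
    push_cast
    rfl
  rw [crossingFactor, hsqrt, hdual, hdual, vacuumTerm_ofReal, vacuumTerm_ofReal,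
    spectralSum_ofReal, spectralSum_ofReal] at h
  exact_mod_cast h

end ModularInvariant

namespace IsSpectrum

variable {A T : ℝ} {ν : ℤ → Measure ℝ}

lemma ae_gap_lt (hν : IsSpectrum T ν) (J : ℤ) : ∀ᵐ h ∂ν J, T < h ∧ T < h + J :=
  ae_iff.mpr (hν.1 J)

lemma integrable_exp (hν : IsSpectrum T ν) {b b' : ℝ} (hb : 0 < b) (hb' : 0 < b') (J : ℤ) :
    Integrable (fun h : ℝ => exp (-b * h - b' * (h + J))) (ν J) := by
  refine ⟨by fun_prop, ?_⟩
  rw [hasFiniteIntegral_iff_ofReal (ae_of_all _ fun _ => (exp_pos _).le)]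
  exact (ENNReal.le_tsum J).trans_lt (hν.2 b b' hb hb')

lemma summable_boltzmannTerm (hν : IsSpectrum T ν) {b b' : ℝ} (hb : 0 < b) (hb' : 0 < b') :
    Summable (boltzmannTerm ν b b') := by
  refine (ENNReal.summable_toReal (hν.2 b b' hb hb').ne).congr fun J => ?_
  rw [boltzmannTerm, integral_eq_lintegral_of_nonneg_ae (ae_of_all _ fun _ => (exp_pos _).le)
    (by fun_prop)]

lemma norm_spectralSum_le (hν : IsSpectrum T ν) {βL βR : ℂ} (hL : 0 < βL.re) (hR : 0 < βR.re) :
    ‖spectralSum ν βL βR‖ ≤ boltzmannSum ν βL.re βR.re :=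
  tsum_of_norm_bounded (hν.summable_boltzmannTerm hL hR).hasSum (norm_spectralTerm_le ν βL βR)

lemma boltzmannSum_add_le (hν : IsSpectrum T ν) {b b' s t : ℝ} (hb : 0 < b) (hb' : 0 < b')
    (hs : 0 ≤ s) (ht : 0 ≤ t) :
    boltzmannSum ν (b + s) (b' + t) ≤ exp (-(s + t) * T) * boltzmannSum ν b b' := by
  rw [boltzmannSum, boltzmannSum, ← tsum_mul_left]
  refine Summable.tsum_le_tsum (fun J => ?_) (hν.summable_boltzmannTerm (by linarith) (by linarith))
    ((hν.summable_boltzmannTerm hb hb').mul_left _)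
  rw [boltzmannTerm, boltzmannTerm, ← integral_const_mul]
  refine integral_mono_ae (hν.integrable_exp (by linarith) (by linarith) J)
    ((hν.integrable_exp hb hb' J).const_mul _) ?_
  filter_upwards [hν.ae_gap_lt J] with h hgap
  rw [← exp_add, exp_le_exp]
  nlinarith [mul_le_mul_of_nonneg_left hgap.1.le hs, mul_le_mul_of_nonneg_left hgap.2.le ht]

lemma boltzmannSum_le_boltzmannSum_one (hν : IsSpectrum T ν) (hT : 0 ≤ T) {b b' : ℝ}
    (hb : 1 ≤ b) (hb' : 1 ≤ b') : boltzmannSum ν b b' ≤ boltzmannSum ν 1 1 := by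
  have h := hν.boltzmannSum_add_le one_pos one_pos (sub_nonneg.mpr hb) (sub_nonneg.mpr hb')
  rw [add_sub_cancel, add_sub_cancel] at h
  refine h.trans (mul_le_of_le_one_left (boltzmannSum_nonneg ν 1 1) ?_)
  rw [exp_le_one_iff]
  nlinarith

-- All terms are nonnegative, so both sides of the crossing equation bound the sum.
lemma boltzmannSum_le (hν : IsSpectrum T ν) (hmod : ModularInvariant A ν) (hA : 0 ≤ A)
    (hT : 0 ≤ T) {b b' : ℝ} (hb : 0 < b) (hb' : 0 < b') (hb4 : b ≤ 4 * π ^ 2)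
    (hb4' : b' ≤ 4 * π ^ 2) :
    boltzmannSum ν b b' ≤ (1 + boltzmannSum ν 1 1) * (√(4 * π ^ 2 / (b * b')) *
      exp (A * (4 * π ^ 2 / b + 4 * π ^ 2 / b'))) := by
  have one_sub_exp_nonneg {y : ℝ} (hy : 0 ≤ y) : 0 ≤ 1 - exp (-y) :=
    sub_nonneg.mpr (exp_le_one_iff.mpr (neg_nonpos.mpr hy))
  have one_sub_exp_le (y : ℝ) : 1 - exp (-y) ≤ 1 := by linarith [exp_pos (-y)]
  have hlower : boltzmannSum ν b b' ≤
      exp (A * (b + b')) * ((1 - exp (-b)) * (1 - exp (-b')) + boltzmannSum ν b b') := by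
    have hvac := mul_nonneg (one_sub_exp_nonneg hb.le) (one_sub_exp_nonneg hb'.le)
    have hexp : 1 ≤ exp (A * (b + b')) := one_le_exp (by positivity)
    nlinarith [boltzmannSum_nonneg ν b b']
  have hvac_dual : (1 - exp (-(4 * π ^ 2 / b))) * (1 - exp (-(4 * π ^ 2 / b'))) ≤ 1 :=
    mul_le_one₀ (one_sub_exp_le _) (one_sub_exp_nonneg (by positivity)) (one_sub_exp_le _)
  have hdual := hν.boltzmannSum_le_boltzmannSum_one hT
    ((one_le_div hb).mpr hb4) ((one_le_div hb').mpr hb4')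
  rw [hmod.crossing_real hb hb'] at hlower
  refine hlower.trans ?_
  rw [mul_comm]
  gcongr

end IsSpectrum

/-- The exponential rate, in `1 / Re βR` as `βR → 0`, of the non-vacuum part of the dual channel.
It is smaller than the rate `4π²A` of the vacuum. -/
def dualRate (A T : ℝ) : ℝ := max (4 * π ^ 2 * (A - T)) (π ^ 2 * A)

lemma dualRate_pos {A : ℝ} (hA : 0 < A) (T : ℝ) : 0 < dualRate A T :=
  lt_max_of_lt_right (by positivity)

lemma dualRate_lt {A T : ℝ} (hA : 0 < A) (hT : 0 < T) : dualRate A T < 4 * π ^ 2 * A := by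
  have := mul_pos (pow_pos pi_pos 2) hA
  have := mul_pos (pow_pos pi_pos 2) hT
  apply max_lt <;> nlinarith

namespace IsSpectrum

variable {A T : ℝ} {ν : ℤ → Measure ℝ}

-- The gap turns `e^{A q}` into `e^{(A - T) q}`.
lemma exp_mul_boltzmannSum_le_of_ge (hν : IsSpectrum T ν) (hmod : ModularInvariant A ν)
    (hA : 0 ≤ A) (hT : 0 ≤ T) {p q N : ℝ} (hN : 1 ≤ N) (hp : 0 < p) (hp4 : p ≤ 4 * π ^ 2)
    (hpN : 4 * π ^ 2 / p ≤ N) (hq : 4 * π ^ 2 ≤ q) :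
    exp (A * (p + q)) * boltzmannSum ν p q ≤ 2 * (1 + boltzmannSum ν 1 1) *
      exp (4 * π ^ 2 * (A + T) + A) * exp ((A + 1) * N) * exp ((A - T) * q) := by
  have hS := boltzmannSum_nonneg ν 1 1
  have hshift := hν.boltzmannSum_add_le (b' := 4 * π ^ 2) (s := 0) hp (by positivity)
    le_rfl (sub_nonneg.mpr hq)
  rw [add_zero, add_sub_cancel, zero_add] at hshift
  have hbase := hν.boltzmannSum_le hmod hA hT hp (b' := 4 * π ^ 2) (by positivity) hp4 le_rfl
  rw [div_self (by positivity), show 4 * π ^ 2 / (p * (4 * π ^ 2)) = 1 / p by field_simp] at hbase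
  have hsqrt : √(1 / p) ≤ 2 * exp N := by
    have hpN' : 1 / p ≤ N := le_trans (by gcongr; nlinarith [pi_gt_three]) hpN
    linarith [sqrt_le_one_add (by positivity : 0 ≤ 1 / p), add_one_le_exp N]
  calc exp (A * (p + q)) * boltzmannSum ν p q
      ≤ exp (A * (4 * π ^ 2 + q)) * (exp (-(q - 4 * π ^ 2) * T) *
          ((1 + boltzmannSum ν 1 1) * (2 * exp N * exp (A * (N + 1))))) := by
        gcongr
        · exact boltzmannSum_nonneg ν p q
        · refine hshift.trans ?_
          gcongr
          refine hbase.trans ?_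
          gcongr
    _ = 2 * (1 + boltzmannSum ν 1 1) * (exp (A * (4 * π ^ 2 + q)) *
          exp (-(q - 4 * π ^ 2) * T) * exp N * exp (A * (N + 1))) := by ring
    _ = 2 * (1 + boltzmannSum ν 1 1) * (exp (4 * π ^ 2 * (A + T) + A) * exp ((A + 1) * N) *
          exp ((A - T) * q)) := by
        simp only [← exp_add]
        ring_nf
    _ = _ := by ring

lemma exp_mul_boltzmannSum_le_of_le (hν : IsSpectrum T ν) (hmod : ModularInvariant A ν)
    (hA : 0 ≤ A) (hT : 0 ≤ T) {p q N y : ℝ} (hN : 1 ≤ N) (hp : 0 < p) (hp4 : p ≤ 4 * π ^ 2)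
    (hpN : 4 * π ^ 2 / p ≤ N) (hq : 0 < q) (hq4 : q ≤ 4 * π ^ 2) (hqy : 4 * π ^ 2 / q ≤ y) :
    exp (A * (p + q)) * boltzmannSum ν p q ≤ 2 * (1 + boltzmannSum ν 1 1) *
      exp (8 * π ^ 2 * A) * exp ((A + 1) * N) * (y * exp (A * y)) := by
  have hS := boltzmannSum_nonneg ν 1 1
  have hy : 1 ≤ y := ((one_le_div hq).mpr hq4).trans hqy
  have hsqrt : √(4 * π ^ 2 / (p * q)) ≤ 2 * exp N * y := by
    have hle : 4 * π ^ 2 / (p * q) ≤ N * y :=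
      calc 4 * π ^ 2 / (p * q) ≤ (4 * π ^ 2) * (4 * π ^ 2) / (p * q) := by
            refine div_le_div_of_nonneg_right ?_ (by positivity)
            exact le_mul_of_one_le_right (by positivity) (by nlinarith [pi_gt_three])
        _ = 4 * π ^ 2 / p * (4 * π ^ 2 / q) := by ring
        _ ≤ N * y := by gcongr
    calc √(4 * π ^ 2 / (p * q)) ≤ 1 + N * y := by
          linarith [sqrt_le_one_add (by positivity : 0 ≤ 4 * π ^ 2 / (p * q))]
      _ ≤ 2 * (N * y) := by linarith [one_le_mul_of_one_le_of_one_le hN hy]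
      _ ≤ 2 * (exp N * y) := by gcongr; linarith [add_one_le_exp N]
      _ = 2 * exp N * y := by ring
  calc exp (A * (p + q)) * boltzmannSum ν p q
      ≤ exp (A * (4 * π ^ 2 + 4 * π ^ 2)) *
          ((1 + boltzmannSum ν 1 1) * (2 * exp N * y * exp (A * (N + y)))) := by
        gcongr
        · exact boltzmannSum_nonneg ν p q
        · refine (hν.boltzmannSum_le hmod hA hT hp hq hp4 hq4).trans ?_
          gcongr
    _ = 2 * (1 + boltzmannSum ν 1 1) * (exp (A * (4 * π ^ 2 + 4 * π ^ 2)) * exp N *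
          exp (A * (N + y))) * y := by ring
    _ = 2 * (1 + boltzmannSum ν 1 1) * (exp (8 * π ^ 2 * A) * exp ((A + 1) * N) *
          exp (A * y)) * y := by
        simp only [← exp_add]
        ring_nf
    _ = _ := by ring

lemma exists_exp_mul_boltzmannSum_le (hν : IsSpectrum T ν) (hmod : ModularInvariant A ν)
    (hA : 0 ≤ A) (hT : 0 ≤ T) : ∃ C, 0 < C ∧ ∀ p q N x : ℝ, 1 ≤ N → 0 < p → p ≤ 4 * π ^ 2 →
      4 * π ^ 2 / p ≤ N → 0 < x → x ≤ 1 → 0 < q → q ≤ 4 * π ^ 2 / x →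
      4 * π ^ 2 / q ≤ x + π ^ 2 / x →
      exp (A * (p + q)) * boltzmannSum ν p q ≤
        C * exp ((A + 1) * N) * x⁻¹ * exp (dualRate A T / x) := by
  have hS := boltzmannSum_nonneg ν 1 1
  have hrate : 0 ≤ dualRate A T := le_max_of_le_right (by positivity)
  refine ⟨2 * (1 + boltzmannSum ν 1 1) * exp (8 * π ^ 2 * A + 4 * π ^ 2 * T + A) * (1 + π ^ 2),
    by positivity, fun p q N x hN hp hp4 hpN hx hx1 hq hqx hqx' => ?_⟩
  have hxinv : 1 ≤ x⁻¹ := (one_le_inv₀ hx).mpr hx1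
  rcases le_total (4 * π ^ 2) q with hq4 | hq4
  · have hexp : (A - T) * q ≤ dualRate A T / x := by
      rcases le_total A T with hAT | hAT
      · exact (mul_nonpos_of_nonpos_of_nonneg (by linarith) hq.le).trans (by positivity)
      · calc (A - T) * q ≤ (A - T) * (4 * π ^ 2 / x) := by gcongr
          _ = 4 * π ^ 2 * (A - T) / x := by ring
          _ ≤ dualRate A T / x := by gcongr; exact le_max_left _ _
    have hconst : 4 * π ^ 2 * (A + T) + A ≤ 8 * π ^ 2 * A + 4 * π ^ 2 * T + A := by
      nlinarith [mul_nonneg (sq_nonneg π) hA]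
    refine (hν.exp_mul_boltzmannSum_le_of_ge hmod hA hT hN hp hp4 hpN hq4).trans ?_
    calc _ ≤ 2 * (1 + boltzmannSum ν 1 1) * exp (8 * π ^ 2 * A + 4 * π ^ 2 * T + A) *
            exp ((A + 1) * N) * exp (dualRate A T / x) * (1 * 1) := by rw [mul_one, mul_one]; gcongr
      _ ≤ 2 * (1 + boltzmannSum ν 1 1) * exp (8 * π ^ 2 * A + 4 * π ^ 2 * T + A) *
            exp ((A + 1) * N) * exp (dualRate A T / x) * ((1 + π ^ 2) * x⁻¹) := by
          gcongr
          linarith [sq_nonneg π]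
      _ = _ := by ring
  · have hy : x + π ^ 2 / x ≤ (1 + π ^ 2) * x⁻¹ := by
      rw [div_eq_mul_inv]
      linarith
    have hexp : A * (x + π ^ 2 / x) ≤ A + dualRate A T / x :=
      calc A * (x + π ^ 2 / x) = A * x + π ^ 2 * A / x := by ring
        _ ≤ A * 1 + dualRate A T / x := by gcongr; exact le_max_right _ _
        _ = _ := by ring
    refine (hν.exp_mul_boltzmannSum_le_of_le hmod hA hT hN hp hp4 hpN hq hq4 hqx').trans ?_
    calc _ ≤ 2 * (1 + boltzmannSum ν 1 1) * exp (8 * π ^ 2 * A + 4 * π ^ 2 * T) *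
            exp ((A + 1) * N) * ((1 + π ^ 2) * x⁻¹ * exp (A + dualRate A T / x)) := by
          gcongr
          exact le_add_of_nonneg_right (by positivity)
      _ = _ := by
          rw [exp_add A, exp_add _ A]
          ring

lemma exists_norm_crossingFactor_mul_spectralSum_le (hν : IsSpectrum T ν)
    (hmod : ModularInvariant A ν) (hA : 0 ≤ A) (hT : 0 ≤ T) :
    ∃ C, 0 < C ∧ ∀ βL βR : ℂ, 1 ≤ βL.re → 0 < βR.re → βR.re ≤ 1 → |βR.im| ≤ π →
      ‖crossingFactor A βL βR * spectralSum ν (modularDual βL) (modularDual βR)‖ ≤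
        C * exp ((A + 1) * ‖βL‖ ^ 2) * βR.re⁻¹ ^ 2 * exp (dualRate A T / βR.re) := by
  obtain ⟨C, hC, hbound⟩ := hν.exists_exp_mul_boltzmannSum_le hmod hA hT
  refine ⟨8 * π ^ 2 * C, by positivity, fun βL βR hL hR hR1 him => ?_⟩
  have hL0 : 0 < βL.re := one_pos.trans_le hL
  have hnormL : 1 ≤ ‖βL‖ := hL.trans (Complex.re_le_norm βL)
  have hnormR : 0 < ‖βR‖ := norm_pos_of_re_pos hR
  have hxinv : 1 ≤ βR.re⁻¹ := (one_le_inv₀ hR).mpr hR1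
  have hsqR : ‖βR‖ ^ 2 ≤ βR.re ^ 2 + π ^ 2 := by
    rw [← Complex.normSq_eq_norm_sq, Complex.normSq_apply]
    nlinarith [sq_le_sq' (neg_le_of_abs_le him) (le_of_abs_le him)]
  have hpL := modularDual_re_pos hL0
  have hpR := modularDual_re_pos hR
  have hkey := hbound _ _ (‖βL‖ ^ 2) _ (one_le_pow₀ hnormL) hpL
    ((modularDual_re_le hL0).trans (div_le_self (by positivity) hL))
    (by rw [four_pi_sq_div_modularDual_re hL0]; exact div_le_self (by positivity) hL)
    hR hR1 hpR (modularDual_re_le hR) (by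
      rw [four_pi_sq_div_modularDual_re hR, div_le_iff₀ hR, add_mul, div_mul_cancel₀ _ hR.ne']
      linarith)
  have hsqrt : √(4 * π ^ 2 / (‖βL‖ * ‖βR‖)) ≤ 8 * π ^ 2 * βR.re⁻¹ := by
    have hle : 4 * π ^ 2 / (‖βL‖ * ‖βR‖) ≤ 4 * π ^ 2 * βR.re⁻¹ := by
      rw [← div_eq_mul_inv]
      gcongr
      nlinarith [Complex.re_le_norm βR]
    refine (sqrt_le_one_add (by positivity)).trans ?_
    nlinarith [pi_gt_three]
  rw [norm_mul, norm_crossingFactor, mul_assoc]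
  calc _ ≤ 8 * π ^ 2 * βR.re⁻¹ *
        (C * exp ((A + 1) * ‖βL‖ ^ 2) * βR.re⁻¹ * exp (dualRate A T / βR.re)) := by
        refine mul_le_mul hsqrt (le_trans ?_ hkey) (by positivity) (by positivity)
        gcongr
        exact hν.norm_spectralSum_le hpL hpR
    _ = _ := by ring

end IsSpectrum

/-! ### Extraction of a single spin -/

/-- The two-sided Laplace transform of a measure on `ℝ`. -/
def laplaceTransform (μ : Measure ℝ) (s : ℂ) : ℂ := ∫ h : ℝ, Complex.exp (-s * h) ∂μ

/-- The point `x + iθ` of the vertical segment over which spins are extracted. -/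
def contourPoint (x θ : ℝ) : ℂ := x + θ * Complex.I

@[simp] lemma contourPoint_re (x θ : ℝ) : (contourPoint x θ).re = x := by simp [contourPoint]

@[simp] lemma contourPoint_im (x θ : ℝ) : (contourPoint x θ).im = θ := by simp [contourPoint]

lemma continuous_contourPoint (x : ℝ) : Continuous (contourPoint x) := by
  unfold contourPoint
  fun_prop

/-- The function of `β = βR`, at fixed `βL + βR = s`, whose mean over a period is the Laplace
transform of `ν J`. -/
def spinKernel (ν : ℤ → Measure ℝ) (J : ℤ) (s β : ℂ) : ℂ :=
  Complex.exp (β * J) * spectralSum ν (s - β) β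

lemma spectralTerm_sub_eq (ν : ℤ → Measure ℝ) (s β : ℂ) (J : ℤ) :
    spectralTerm ν (s - β) β J = Complex.exp (-β * J) * laplaceTransform (ν J) s := by
  rw [spectralTerm, laplaceTransform, ← integral_const_mul]
  congr 1
  ext h
  rw [← Complex.exp_add]
  congr 1
  ring

lemma cexp_mul_spectralTerm_sub (ν : ℤ → Measure ℝ) (J J' : ℤ) (s β : ℂ) :
    Complex.exp (β * J) * spectralTerm ν (s - β) β J' =
      Complex.exp (β * (J - J' : ℤ)) * laplaceTransform (ν J') s := by
  rw [spectralTerm_sub_eq, ← mul_assoc, ← Complex.exp_add]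
  push_cast
  congr 2
  ring

lemma norm_cexp_mul_spectralTerm_sub_le (ν : ℤ → Measure ℝ) (J J' : ℤ) (s β : ℂ) :
    ‖Complex.exp (β * J) * spectralTerm ν (s - β) β J'‖ ≤
      exp (β.re * J) * boltzmannTerm ν (s.re - β.re) β.re J' := by
  rw [norm_mul, Complex.norm_exp, show (β * J).re = β.re * J by simp, ← Complex.sub_re]
  gcongr
  exact norm_spectralTerm_le ν (s - β) β J'

lemma norm_spinKernel_term_le (ν : ℤ → Measure ℝ) (J J' : ℤ) (s : ℂ) (x θ : ℝ) :
    ‖Complex.exp (contourPoint x θ * (J - J' : ℤ)) * laplaceTransform (ν J') s‖ ≤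
      exp (x * J) * boltzmannTerm ν (s.re - x) x J' := by
  simpa only [cexp_mul_spectralTerm_sub, contourPoint_re] using
    norm_cexp_mul_spectralTerm_sub_le ν J J' s (contourPoint x θ)

lemma integral_cexp_contourPoint_mul_int (x : ℝ) {k : ℤ} (hk : k ≠ 0) :
    ∫ θ in -π..π, Complex.exp (contourPoint x θ * k) = 0 := by
  have hsplit (θ : ℝ) : Complex.exp (contourPoint x θ * k) =
      Complex.exp (x * k) * Complex.exp (Complex.I * k * θ) := by
    rw [← Complex.exp_add, contourPoint]
    congr 1
    ring
  have hperiodic : Complex.exp (Complex.I * k * π) = Complex.exp (Complex.I * k * (-π : ℝ)) := by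
    rw [Complex.exp_eq_exp_iff_exists_int]
    refine ⟨k, ?_⟩
    push_cast
    ring
  simp_rw [hsplit]
  rw [intervalIntegral.integral_const_mul,
    integral_exp_mul_complex (mul_ne_zero Complex.I_ne_zero (Int.cast_ne_zero.mpr hk)), hperiodic,
    sub_self, zero_div, mul_zero]

namespace IsSpectrum

variable {A T : ℝ} {ν : ℤ → Measure ℝ} {s : ℂ} {x : ℝ}

lemma summable_exp_mul_boltzmannTerm (hν : IsSpectrum T ν) (J : ℤ) (hx : 0 < x) (hxs : x < s.re) :
    Summable fun J' => exp (x * J) * boltzmannTerm ν (s.re - x) x J' :=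
  (hν.summable_boltzmannTerm (sub_pos.mpr hxs) hx).mul_left _

lemma hasSum_spinKernel (hν : IsSpectrum T ν) (J : ℤ) {β : ℂ} (hβ : 0 < β.re)
    (hβs : β.re < s.re) :
    HasSum (fun J' : ℤ => Complex.exp (β * (J - J' : ℤ)) * laplaceTransform (ν J') s)
      (spinKernel ν J s β) := by
  simp_rw [← cexp_mul_spectralTerm_sub]
  rw [spinKernel, spectralSum, ← tsum_mul_left]
  exact (Summable.of_norm_bounded (hν.summable_exp_mul_boltzmannTerm J hβ hβs)
    fun J' => norm_cexp_mul_spectralTerm_sub_le ν J J' s β).hasSum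

lemma continuous_spinKernel (hν : IsSpectrum T ν) (J : ℤ) (hx : 0 < x) (hxs : x < s.re) :
    Continuous fun θ => spinKernel ν J s (contourPoint x θ) := by
  have hcont := continuous_contourPoint x
  have hsum (θ : ℝ) := (hν.hasSum_spinKernel J (s := s) (β := contourPoint x θ)
    (by simpa) (by simpa)).tsum_eq
  simp_rw [← hsum]
  exact continuous_tsum (fun J' => by fun_prop) (hν.summable_exp_mul_boltzmannTerm J hx hxs)
    fun J' θ => norm_spinKernel_term_le ν J J' s x θ

lemma integral_spinKernel (hν : IsSpectrum T ν) (J : ℤ) (hx : 0 < x) (hxs : x < s.re) :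
    ∫ θ in -π..π, spinKernel ν J s (contourPoint x θ) = 2 * π * laplaceTransform (ν J) s := by
  have hcont := continuous_contourPoint x
  have hsum := intervalIntegral.hasSum_integral_of_dominated_convergence (μ := volume)
    (a := -π) (b := π) (fun J' _ => exp (x * J) * boltzmannTerm ν (s.re - x) x J')
    (fun J' => Continuous.aestronglyMeasurable (by fun_prop))
    (fun J' => ae_of_all _ fun θ _ => norm_spinKernel_term_le ν J J' s x θ)
    (ae_of_all _ fun _ _ => hν.summable_exp_mul_boltzmannTerm J hx hxs)
    intervalIntegrable_const
    (ae_of_all _ fun θ _ => hν.hasSum_spinKernel J (β := contourPoint x θ) (by simpa) (by simpa))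
  rw [← hsum.tsum_eq, tsum_eq_single J]
  · simp only [sub_self, Int.cast_zero, mul_zero, Complex.exp_zero, one_mul,
      intervalIntegral.integral_const, Complex.real_smul]
    push_cast
    ring
  · intro J' hJ'
    rw [intervalIntegral.integral_mul_const,
      integral_cexp_contourPoint_mul_int x (sub_ne_zero.mpr hJ'.symm), zero_mul]

end IsSpectrum

/-- The contribution of the dual-channel vacuum to `spinKernel`. -/
def vacuumKernel (A : ℝ) (J : ℤ) (s β : ℂ) : ℂ :=
  Complex.exp (β * J) * (Complex.exp (-(A * s)) *
    (crossingFactor A (s - β) β * vacuumTerm (modularDual (s - β)) (modularDual β)))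

lemma ModularInvariant.spinKernel_sub_vacuumKernel {A : ℝ} {ν : ℤ → Measure ℝ}
    (hmod : ModularInvariant A ν) (J : ℤ) {s β : ℂ} (hβ : 0 < β.re) (hβs : β.re < s.re) :
    spinKernel ν J s β - vacuumKernel A J s β =
      Complex.exp (β * J) * (Complex.exp (-(A * s)) *
        (crossingFactor A (s - β) β * spectralSum ν (modularDual (s - β)) (modularDual β)) -
          vacuumTerm (s - β) β) := by
  have hcross := hmod.crossing (βL := s - β) (βR := β) (by simpa) hβ
  rw [sub_add_cancel] at hcross
  have hexp : Complex.exp (-(A * s)) * Complex.exp (A * s) = 1 := by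
    rw [← Complex.exp_add, neg_add_cancel, Complex.exp_zero]
  rw [spinKernel, vacuumKernel]
  linear_combination (Complex.exp (β * J) * Complex.exp (-(A * s))) * hcross -
    (Complex.exp (β * J) * (vacuumTerm (s - β) β + spectralSum ν (s - β) β)) * hexp

lemma ne_zero_of_re_pos {z : ℂ} (hz : 0 < z.re) : z ≠ 0 := norm_pos_iff.mp (norm_pos_of_re_pos hz)

-- Both arguments lie in `(-π/2, π/2)`, so they add up without wrapping around.
lemma four_pi_sq_div_mul_mem_slitPlane {z w : ℂ} (hz : 0 < z.re) (hw : 0 < w.re) :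
    4 * (π : ℂ) ^ 2 / (z * w) ∈ Complex.slitPlane := by
  have hz0 := ne_zero_of_re_pos hz
  have hw0 := ne_zero_of_re_pos hw
  have hargz := abs_lt.mp (Complex.abs_arg_lt_pi_div_two_iff.mpr (Or.inl hz))
  have hargw := abs_lt.mp (Complex.abs_arg_lt_pi_div_two_iff.mpr (Or.inl hw))
  have harg : (z * w).arg = z.arg + w.arg :=
    Complex.arg_mul hz0 hw0 ⟨by linarith, by linarith⟩
  have hreal : 4 * (π : ℂ) ^ 2 / (z * w) = ((4 * π ^ 2 : ℝ) : ℂ) * (z * w)⁻¹ := by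
    push_cast
    rw [div_eq_mul_inv]
  rw [Complex.mem_slitPlane_iff_arg]
  refine ⟨?_, by simp [hz0, hw0]⟩
  rw [hreal, Complex.arg_real_mul _ (by positivity), Complex.arg_inv, harg,
    if_neg (by linarith)]
  linarith

lemma continuous_vacuumKernel (A : ℝ) (J : ℤ) {s : ℂ} {x : ℝ} (hx : 0 < x) (hxs : x < s.re) :
    Continuous fun θ => vacuumKernel A J s (contourPoint x θ) := by
  have hcont := continuous_contourPoint x
  have hR (θ : ℝ) : 0 < (contourPoint x θ).re := by simpa
  have hL (θ : ℝ) : 0 < (s - contourPoint x θ).re := by simpa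
  have hR0 (θ : ℝ) := ne_zero_of_re_pos (hR θ)
  have hL0 (θ : ℝ) := ne_zero_of_re_pos (hL θ)
  have hsqrt : Continuous fun θ =>
      (4 * (π : ℂ) ^ 2 / ((s - contourPoint x θ) * contourPoint x θ)) ^ ((1 : ℂ) / 2) :=
    (continuous_const.div (by fun_prop) fun θ => mul_ne_zero (hL0 θ) (hR0 θ)).cpow
      continuous_const fun θ => four_pi_sq_div_mul_mem_slitPlane (hL θ) (hR θ)
  unfold vacuumKernel crossingFactor vacuumTerm modularDual
  fun_prop (disch := assumption)

/-- The point of the line `Re s = 2` at which the Laplace transform of `μ` is the characteristic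
function at frequency `w` of `e^{-2h} μ`. -/
def laplaceLine (w : ℝ) : ℂ := 2 - w * Complex.I

@[simp] lemma laplaceLine_re (w : ℝ) : (laplaceLine w).re = 2 := by simp [laplaceLine]

@[simp] lemma laplaceLine_im (w : ℝ) : (laplaceLine w).im = -w := by simp [laplaceLine]

lemma norm_laplaceLine_sub_contourPoint_sq_le {x θ : ℝ} (hx : 0 ≤ x) (hx1 : x ≤ 1)
    (hθ : |θ| ≤ π) (w : ℝ) :
    ‖laplaceLine w - contourPoint x θ‖ ^ 2 ≤ 4 + 2 * π ^ 2 + 2 * w ^ 2 := by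
  have hθ2 : θ ^ 2 ≤ π ^ 2 := by
    rw [← sq_abs]
    gcongr
  rw [← Complex.normSq_eq_norm_sq, Complex.normSq_apply]
  simp only [Complex.sub_re, Complex.sub_im, laplaceLine_re, laplaceLine_im, contourPoint_re,
    contourPoint_im]
  nlinarith [sq_nonneg (w - θ)]

namespace IsSpectrum

variable {A T : ℝ} {ν : ℤ → Measure ℝ}

lemma exists_norm_spinKernel_sub_vacuumKernel_le (hν : IsSpectrum T ν)
    (hmod : ModularInvariant A ν) (hA : 0 < A) (hT : 0 ≤ T) :
    ∃ C, 0 < C ∧ ∀ (J : ℤ) (x θ w : ℝ), 0 < x → x ≤ 1 → |θ| ≤ π →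
      ‖spinKernel ν J (laplaceLine w) (contourPoint x θ) -
          vacuumKernel A J (laplaceLine w) (contourPoint x θ)‖ ≤
        C * exp (2 * (A + 1) * w ^ 2) * x⁻¹ ^ 2 * exp (dualRate A T / x) * exp (x * J) := by
  obtain ⟨C, hC, hbound⟩ :=
    hν.exists_norm_crossingFactor_mul_spectralSum_le hmod hA.le hT
  refine ⟨C * exp ((A + 1) * (4 + 2 * π ^ 2)) + 4, by positivity,
    fun J x θ w hx hx1 hθ => ?_⟩
  set s := laplaceLine w
  set β := contourPoint x θ
  set D := exp (2 * (A + 1) * w ^ 2) * x⁻¹ ^ 2 * exp (dualRate A T / x) with hD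
  have hsβ : 1 ≤ (s - β).re := by
    simp only [s, β, Complex.sub_re, laplaceLine_re, contourPoint_re]
    linarith
  have hvac : ‖vacuumTerm (s - β) β‖ ≤ 4 :=
    norm_vacuumTerm_le (by linarith) (by simpa [β] using hx.le)
  have hvac_exp : ‖Complex.exp (-(A * s))‖ ≤ 1 := by
    rw [Complex.norm_exp, exp_le_one_iff, Complex.neg_re, Complex.re_ofReal_mul, laplaceLine_re]
    linarith
  have hD1 : 1 ≤ D := by
    have hrate := dualRate_pos hA T
    refine one_le_mul_of_one_le_of_one_le (one_le_mul_of_one_le_of_one_le (one_le_exp ?_)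
      (one_le_pow₀ ((one_le_inv₀ hx).mpr hx1))) (one_le_exp ?_) <;> positivity
  have hspec : ‖crossingFactor A (s - β) β * spectralSum ν (modularDual (s - β)) (modularDual β)‖
      ≤ C * exp ((A + 1) * (4 + 2 * π ^ 2)) * D := by
    have h := hbound (s - β) β hsβ (by simpa [β]) (by simpa [β]) (by simpa [β])
    rw [contourPoint_re] at h
    calc _ ≤ C * (exp ((A + 1) * (4 + 2 * π ^ 2)) * exp (2 * (A + 1) * w ^ 2)) * x⁻¹ ^ 2 *
            exp (dualRate A T / x) := by
          refine h.trans ?_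
          rw [← exp_add]
          gcongr
          nlinarith [norm_laplaceLine_sub_contourPoint_sq_le hx.le hx1 hθ w]
      _ = _ := by rw [hD]; ring
  rw [hmod.spinKernel_sub_vacuumKernel J (by simpa [β]) (by linarith [hsβ, Complex.sub_re s β]),
    norm_mul, Complex.norm_exp, show (β * J).re = x * J by simp [β], mul_comm]
  gcongr
  calc _ ≤ 1 * (C * exp ((A + 1) * (4 + 2 * π ^ 2)) * D) + 4 * D := by
        refine (norm_sub_le _ _).trans (add_le_add ?_ (hvac.trans (by linarith)))
        rw [norm_mul]
        gcongr
    _ = _ := by rw [hD]; ring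

theorem exists_norm_laplaceTransform_sub_integral_vacuumKernel_le (hν : IsSpectrum T ν)
    (hmod : ModularInvariant A ν) (hA : 0 < A) (hT : 0 ≤ T) :
    ∃ C, 0 < C ∧ ∀ (J : ℤ) (x w : ℝ), 0 < x → x ≤ 1 →
      ‖2 * π * laplaceTransform (ν J) (laplaceLine w) -
          ∫ θ in -π..π, vacuumKernel A J (laplaceLine w) (contourPoint x θ)‖ ≤
        C * exp (2 * (A + 1) * w ^ 2) * x⁻¹ ^ 2 * exp (dualRate A T / x) * exp (x * J) := by
  obtain ⟨C, hC, hbound⟩ := hν.exists_norm_spinKernel_sub_vacuumKernel_le hmod hA hT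
  refine ⟨2 * π * C, by positivity, fun J x w hx hx1 => ?_⟩
  have hxs : x < (laplaceLine w).re := by
    rw [laplaceLine_re]
    linarith
  rw [← hν.integral_spinKernel J hx hxs, ← intervalIntegral.integral_sub
    ((hν.continuous_spinKernel J hx hxs).intervalIntegrable _ _)
    ((continuous_vacuumKernel A J hx hxs).intervalIntegrable _ _)]
  refine (intervalIntegral.norm_integral_le_of_norm_le_const fun θ hθ =>
    hbound J x θ w hx hx1 ?_).trans_eq ?_
  · rw [Set.uIoc_of_le (by linarith [pi_pos])] at hθ
    exact abs_le.mpr ⟨hθ.1.le, hθ.2⟩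
  · rw [abs_of_nonneg (by linarith [pi_pos])]
    ring

end IsSpectrum

/-! ### Saddle-point analysis of the vacuum kernel -/

lemma ofReal_mul_cpow_one_half {c : ℝ} (hc : 0 < c) {z : ℂ} (hz : z ≠ 0) :
    ((c : ℂ) * z) ^ ((1 : ℂ) / 2) = √c * z ^ ((1 : ℂ) / 2) := by
  have hc' : (c : ℂ) ≠ 0 := Complex.ofReal_ne_zero.mpr hc.ne'
  rw [Complex.cpow_def_of_ne_zero (mul_ne_zero hc' hz), Complex.log_ofReal_mul hc hz, add_mul,
    Complex.exp_add, Complex.cpow_def_of_ne_zero hz, sqrt_eq_rpow, rpow_def_of_pos hc]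
  push_cast
  rfl

/-- The constant `a = 2π√A`: the exponent `β J + 4π²A / β` is stationary at `β = a / √J`, where it
equals `2a√J`. -/
def cardyRate (A : ℝ) : ℝ := 2 * π * √A

lemma cardyRate_pos {A : ℝ} (hA : 0 < A) : 0 < cardyRate A := by
  unfold cardyRate
  positivity

lemma cardyRate_sq {A : ℝ} (hA : 0 ≤ A) : cardyRate A ^ 2 = 4 * π ^ 2 * A := by
  rw [cardyRate, mul_pow, sq_sqrt hA]
  ring

/-- The part of the vacuum kernel that varies slowly near the saddle point `β = a / √J`, with the
square root evaluated at `z = β √J / a` in place of `β`. -/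
def slowFactor (A : ℝ) (s β z : ℂ) : ℂ :=
  Complex.exp (-(A * s)) * ((4 * (π : ℂ) ^ 2 / ((s - β) * z)) ^ ((1 : ℂ) / 2) *
    (Complex.exp (A * modularDual (s - β)) * (1 - Complex.exp (-modularDual (s - β)))))

/-- The vacuum kernel at spin `r⁴`, normalized, in the variable `t` for which the contour point is
`β = (a / r²)(1 + i t / r)`. -/
def saddleIntegrand (A : ℝ) (s : ℂ) (r t : ℝ) : ℂ :=
  Complex.exp (-(cardyRate A * t ^ 2 / contourPoint 1 (t / r))) *
    (slowFactor A s (contourPoint (cardyRate A / r ^ 2) (cardyRate A * t / r ^ 3))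
        (contourPoint 1 (t / r)) *
      (1 - Complex.exp
        (-modularDual (contourPoint (cardyRate A / r ^ 2) (cardyRate A * t / r ^ 3)))))

lemma contourPoint_rescale (a t : ℝ) {r : ℝ} (hr : r ≠ 0) :
    contourPoint (a / r ^ 2) (a * t / r ^ 3) = (a / r ^ 2 : ℝ) * contourPoint 1 (t / r) := by
  have hr' : (r : ℂ) ≠ 0 := Complex.ofReal_ne_zero.mpr hr
  simp only [contourPoint]
  push_cast
  field_simp

lemma contourPoint_ne_zero {x : ℝ} (hx : 0 < x) (θ : ℝ) : contourPoint x θ ≠ 0 :=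
  ne_zero_of_re_pos (by simpa)

lemma saddle_exponent_eq {a r : ℝ} (ha : a ≠ 0) (hr : r ≠ 0) (t : ℝ) :
    (a / r ^ 2 : ℝ) * contourPoint 1 (t / r) * r ^ 4 +
        a ^ 2 / ((a / r ^ 2 : ℝ) * contourPoint 1 (t / r)) =
      2 * a * r ^ 2 - a * t ^ 2 / contourPoint 1 (t / r) := by
  have hr' : (r : ℂ) ≠ 0 := Complex.ofReal_ne_zero.mpr hr
  have ha' : (a : ℂ) ≠ 0 := Complex.ofReal_ne_zero.mpr ha
  have hz := contourPoint_ne_zero one_pos (t / r)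
  have ht : (t : ℂ) ^ 2 = -(r : ℂ) ^ 2 * (contourPoint 1 (t / r) - 1) ^ 2 := by
    simp only [contourPoint, Complex.ofReal_one, add_sub_cancel_left, mul_pow, Complex.I_sq]
    push_cast
    field_simp
  rw [ht]
  push_cast
  field_simp
  ring

lemma cpow_one_half_rescale {a r : ℝ} (ha : 0 < a) (hr : 0 < r) {u z : ℂ} (hu : u ≠ 0)
    (hz : z ≠ 0) :
    (4 * (π : ℂ) ^ 2 / (u * ((a / r ^ 2 : ℝ) * z))) ^ ((1 : ℂ) / 2) =
      (r / √a : ℝ) * (4 * (π : ℂ) ^ 2 / (u * z)) ^ ((1 : ℂ) / 2) := by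
  have hr' : (r : ℂ) ≠ 0 := Complex.ofReal_ne_zero.mpr hr.ne'
  have ha' : (a : ℂ) ≠ 0 := Complex.ofReal_ne_zero.mpr ha.ne'
  have hscale : 4 * (π : ℂ) ^ 2 / (u * ((a / r ^ 2 : ℝ) * z)) =
      (r ^ 2 / a : ℝ) * (4 * (π : ℂ) ^ 2 / (u * z)) := by
    push_cast
    field_simp
  rw [hscale, ofReal_mul_cpow_one_half (by positivity) (by simp [hu, hz]),
    sqrt_div (by positivity), sqrt_sq hr.le]

lemma vacuumKernel_eq_saddleIntegrand {A : ℝ} (hA : 0 < A) {J : ℤ} {s : ℂ} {r : ℝ} (hr : 0 < r)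
    (hJ : (J : ℝ) = r ^ 4) (hs : cardyRate A / r ^ 2 < s.re) (t : ℝ) :
    vacuumKernel A J s (contourPoint (cardyRate A / r ^ 2) (cardyRate A * t / r ^ 3)) =
      (exp (2 * cardyRate A * r ^ 2) * (r / √(cardyRate A)) : ℝ) * saddleIntegrand A s r t := by
  have ha := cardyRate_pos hA
  rw [vacuumKernel, saddleIntegrand, slowFactor, crossingFactor, vacuumTerm]
  have hu : s - contourPoint (cardyRate A / r ^ 2) (cardyRate A * t / r ^ 3) ≠ 0 :=
    ne_zero_of_re_pos (by simpa)
  have hrescale := contourPoint_rescale (cardyRate A) t hr.ne'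
  have hexponent := saddle_exponent_eq ha.ne' hr.ne' t
  have hsqrt := cpow_one_half_rescale ha hr hu (contourPoint_ne_zero one_pos (t / r))
  rw [← hrescale] at hexponent hsqrt
  set β := contourPoint (cardyRate A / r ^ 2) (cardyRate A * t / r ^ 3)
  have hJ' : (J : ℂ) = (r : ℂ) ^ 4 := by exact_mod_cast congrArg Complex.ofReal hJ
  have hrate : (A : ℂ) * modularDual β = (cardyRate A : ℂ) ^ 2 / β := by
    have hsq : (cardyRate A : ℂ) ^ 2 = 4 * (π : ℂ) ^ 2 * A := by
      exact_mod_cast congrArg Complex.ofReal (cardyRate_sq hA.le)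
    rw [modularDual, hsq]
    ring
  have hexp : Complex.exp (β * J) * Complex.exp (A * (modularDual (s - β) + modularDual β)) =
      Complex.exp (2 * cardyRate A * r ^ 2) *
        Complex.exp (-(cardyRate A * t ^ 2 / contourPoint 1 (t / r))) *
          Complex.exp (A * modularDual (s - β)) := by
    simp only [← Complex.exp_add]
    congr 1
    rw [hJ']
    linear_combination hexponent + hrate
  rw [hsqrt]
  push_cast
  linear_combination (Complex.exp (-(A * s)) * ((r / √(cardyRate A) : ℂ) *
    (4 * (π : ℂ) ^ 2 / ((s - β) * contourPoint 1 (t / r))) ^ ((1 : ℂ) / 2)) *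
      ((1 - Complex.exp (-modularDual (s - β))) * (1 - Complex.exp (-modularDual β)))) * hexp

lemma one_add_sq_le_exp_of_sq_le {a r t : ℝ} (ha : 0 < a) (hr : 0 < r) (ht : t ^ 2 ≤ r ^ 2) :
    1 + t ^ 2 ≤ (1 + 2 / a) * exp (a * t ^ 2 / (1 + (t / r) ^ 2)) := by
  have hexponent : a * t ^ 2 / 2 ≤ a * t ^ 2 / (1 + (t / r) ^ 2) := by
    gcongr
    have : (t / r) ^ 2 ≤ 1 := by rwa [div_pow, div_le_one (by positivity)]
    linarith
  have hexpand : (1 + 2 / a) * (a * t ^ 2 / 2 + 1) = 1 + t ^ 2 + (a * t ^ 2 / 2 + 2 / a) := by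
    field_simp
    ring
  calc 1 + t ^ 2 ≤ (1 + 2 / a) * (a * t ^ 2 / 2 + 1) := by
        rw [hexpand]
        exact le_add_of_nonneg_right (by positivity)
    _ ≤ (1 + 2 / a) * exp (a * t ^ 2 / (1 + (t / r) ^ 2)) := by
        gcongr
        exact (add_one_le_exp _).trans (exp_le_exp.mpr hexponent)

lemma pow_three_div_six_le_exp {y : ℝ} (hy : 0 ≤ y) : y ^ 3 / 6 ≤ exp y := by
  simpa [Nat.factorial] using pow_div_factorial_le_exp y hy 3

lemma one_add_sq_le_exp_of_le_sq {a r t : ℝ} (ha : 0 < a) (hr : 1 ≤ r) (ht : r ^ 2 ≤ t ^ 2)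
    (htπ : |t| ≤ π * r ^ 3 / a) :
    1 + t ^ 2 ≤ 96 * π ^ 2 / a ^ 5 * exp (a * t ^ 2 / (1 + (t / r) ^ 2)) := by
  have hr0 : 0 < r := one_pos.trans_le hr
  have hexponent : a * r ^ 2 / 2 ≤ a * t ^ 2 / (1 + (t / r) ^ 2) := by
    have hclear : a * t ^ 2 / (1 + (t / r) ^ 2) = a * t ^ 2 * r ^ 2 / (r ^ 2 + t ^ 2) := by
      field_simp
    rw [hclear, div_le_div_iff₀ (by norm_num) (by positivity)]
    nlinarith [mul_nonneg ha.le (sq_nonneg r)]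
  have htsq : a ^ 2 * t ^ 2 ≤ (π * r ^ 3) ^ 2 := by
    rw [le_div_iff₀ ha, mul_comm] at htπ
    rw [← sq_abs t, ← mul_pow]
    gcongr
  have hcube : 2 * t ^ 2 ≤ 96 * π ^ 2 / a ^ 5 * ((a * r ^ 2 / 2) ^ 3 / 6) := by
    have hsimp : 96 * π ^ 2 / a ^ 5 * ((a * r ^ 2 / 2) ^ 3 / 6) = 2 * (π * r ^ 3) ^ 2 / a ^ 2 := by
      field_simp
      ring
    rw [hsimp, le_div_iff₀ (by positivity)]
    linarith
  calc 1 + t ^ 2 ≤ 2 * t ^ 2 := by linarith [one_le_pow₀ hr (n := 2)]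
    _ ≤ 96 * π ^ 2 / a ^ 5 * ((a * r ^ 2 / 2) ^ 3 / 6) := hcube
    _ ≤ 96 * π ^ 2 / a ^ 5 * exp (a * t ^ 2 / (1 + (t / r) ^ 2)) := by
        gcongr
        exact (pow_three_div_six_le_exp (by positivity)).trans (exp_le_exp.mpr hexponent)

lemma exists_exp_neg_le_inv_one_add_sq {a : ℝ} (ha : 0 < a) :
    ∃ K, 0 < K ∧ ∀ r t : ℝ, 1 ≤ r → |t| ≤ π * r ^ 3 / a →
      exp (-(a * t ^ 2 / (1 + (t / r) ^ 2))) ≤ K * (1 + t ^ 2)⁻¹ := by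
  refine ⟨(1 + 2 / a) + 96 * π ^ 2 / a ^ 5, by positivity, fun r t hr ht => ?_⟩
  have hr0 : 0 < r := one_pos.trans_le hr
  have hpoly : 0 ≤ 96 * π ^ 2 / a ^ 5 := by positivity
  have hlin : 0 ≤ 1 + 2 / a := by positivity
  rw [exp_neg, ← div_eq_mul_inv, le_div_iff₀ (by positivity), ← div_eq_inv_mul,
    div_le_iff₀ (exp_pos _)]
  rcases le_total (t ^ 2) (r ^ 2) with hsmall | hlarge
  · refine (one_add_sq_le_exp_of_sq_le ha hr0 hsmall).trans ?_
    exact mul_le_mul_of_nonneg_right (by linarith) (exp_pos _).le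
  · refine (one_add_sq_le_exp_of_le_sq ha hr hlarge ht).trans ?_
    exact mul_le_mul_of_nonneg_right (by linarith) (exp_pos _).le

lemma norm_one_sub_cexp_neg_le_two_mul_norm {u : ℂ} (hu : 0 ≤ u.re) :
    ‖1 - Complex.exp (-u)‖ ≤ 2 * ‖u‖ := by
  rcases le_total ‖u‖ 1 with hsmall | hlarge
  · rw [norm_sub_rev]
    simpa using Complex.norm_exp_sub_one_le (x := -u) (by simpa)
  · exact (norm_one_sub_cexp_neg_le hu).trans (by linarith)

lemma one_le_norm_laplaceLine_sub_contourPoint (w : ℝ) {x : ℝ} (hx : x ≤ 1) (θ : ℝ) :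
    1 ≤ ‖laplaceLine w - contourPoint x θ‖ := by
  refine le_trans ?_ (Complex.re_le_norm _)
  rw [Complex.sub_re, laplaceLine_re, contourPoint_re]
  linarith

lemma one_add_abs_div_six_le_norm_laplaceLine_sub_contourPoint (w : ℝ) {x θ : ℝ} (hx : x ≤ 1)
    (hθ : |θ| ≤ π) : (1 + |w|) / 6 ≤ ‖laplaceLine w - contourPoint x θ‖ := by
  have him := Complex.abs_im_le_norm (laplaceLine w - contourPoint x θ)
  rw [Complex.sub_im, laplaceLine_im, contourPoint_im] at him
  have htri := abs_sub_abs_le_abs_sub (-w) θ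
  rw [abs_neg] at htri
  linarith [pi_lt_four, one_le_norm_laplaceLine_sub_contourPoint w hx θ]

lemma norm_four_pi_sq : ‖4 * (π : ℂ) ^ 2‖ = 4 * π ^ 2 := by
  simp [abs_of_pos pi_pos]

lemma exists_norm_slowFactor_le {A : ℝ} (hA : 0 ≤ A) :
    ∃ K, 0 < K ∧ ∀ w x θ τ : ℝ, x ≤ 1 → |θ| ≤ π →
      ‖slowFactor A (laplaceLine w) (contourPoint x θ) (contourPoint 1 τ)‖ ≤
        K * (1 + |w|) ^ (-(3 / 2) : ℝ) := by
  refine ⟨√(24 * π ^ 2) * exp (4 * π ^ 2 * A) * (48 * π ^ 2), by positivity,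
    fun w x θ τ hx hθ => ?_⟩
  have hone := one_le_norm_laplaceLine_sub_contourPoint w hx θ
  have hgrow := one_add_abs_div_six_le_norm_laplaceLine_sub_contourPoint w hx hθ
  have hre : 0 < (laplaceLine w - contourPoint x θ).re := by
    rw [Complex.sub_re, laplaceLine_re, contourPoint_re]
    linarith
  have hz : 1 ≤ ‖contourPoint 1 τ‖ := by simpa using Complex.re_le_norm (contourPoint 1 τ)
  rw [slowFactor]
  set u := laplaceLine w - contourPoint x θ
  have hw : 0 < 1 + |w| := by positivity
  have hprefactor : ‖Complex.exp (-(A * laplaceLine w))‖ ≤ 1 := by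
    rw [Complex.norm_exp, exp_le_one_iff, Complex.neg_re, Complex.re_ofReal_mul, laplaceLine_re]
    linarith
  have hdual : ‖modularDual u‖ ≤ 24 * π ^ 2 * (1 + |w|)⁻¹ := by
    rw [modularDual, norm_div, norm_four_pi_sq, ← div_eq_mul_inv,
      div_le_div_iff₀ (by positivity) hw]
    nlinarith [sq_nonneg π]
  have hsqrt : ‖(4 * (π : ℂ) ^ 2 / (u * contourPoint 1 τ)) ^ ((1 : ℂ) / 2)‖ ≤
      √(24 * π ^ 2) * √(1 + |w|)⁻¹ := by
    rw [norm_cpow_one_half, ← sqrt_mul (by positivity), ← div_div, norm_div]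
    exact sqrt_le_sqrt ((div_le_self (norm_nonneg _) hz).trans hdual)
  have hexp : ‖Complex.exp (A * modularDual u)‖ ≤ exp (4 * π ^ 2 * A) := by
    rw [Complex.norm_exp, Complex.re_ofReal_mul, exp_le_exp, mul_comm]
    gcongr
    refine (modularDual_re_le hre).trans (div_le_self (by positivity) ?_)
    simp only [u, Complex.sub_re, laplaceLine_re, contourPoint_re]
    linarith
  have hvac : ‖1 - Complex.exp (-modularDual u)‖ ≤ 48 * π ^ 2 * (1 + |w|)⁻¹ :=
    (norm_one_sub_cexp_neg_le_two_mul_norm (modularDual_re_pos hre).le).trans (by linarith)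
  have hpow : (1 + |w|) ^ (-(3 / 2) : ℝ) = √(1 + |w|)⁻¹ * (1 + |w|)⁻¹ := by
    rw [sqrt_eq_rpow, inv_rpow hw.le, ← rpow_neg hw.le, ← rpow_neg_one, ← rpow_add hw]
    norm_num
  rw [hpow, norm_mul, norm_mul, norm_mul]
  calc _ ≤ 1 * (√(24 * π ^ 2) * √(1 + |w|)⁻¹ *
        (exp (4 * π ^ 2 * A) * (48 * π ^ 2 * (1 + |w|)⁻¹))) := by gcongr
    _ = _ := by ring

lemma norm_cexp_neg_mul_sq_div_contourPoint (a τ t : ℝ) :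
    ‖Complex.exp (-(a * t ^ 2 / contourPoint 1 τ))‖ = exp (-(a * t ^ 2 / (1 + τ ^ 2))) := by
  have hmul : (a * t ^ 2 / contourPoint 1 τ : ℂ) = (a * t ^ 2 : ℝ) * (contourPoint 1 τ)⁻¹ := by
    push_cast
    rw [div_eq_mul_inv]
  rw [Complex.norm_exp, Complex.neg_re, hmul, Complex.re_ofReal_mul, Complex.inv_re,
    Complex.normSq_apply, contourPoint_re, contourPoint_im]
  congr 1
  ring

lemma exists_norm_saddleIntegrand_le {A : ℝ} (hA : 0 < A) :
    ∃ K, 0 < K ∧ ∀ w r t : ℝ, 1 ≤ r → cardyRate A ≤ r ^ 2 → |t| ≤ π * r ^ 3 / cardyRate A →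
      ‖saddleIntegrand A (laplaceLine w) r t‖ ≤
        K * (1 + |w|) ^ (-(3 / 2) : ℝ) * (1 + t ^ 2)⁻¹ := by
  have ha := cardyRate_pos hA
  obtain ⟨K, hK, hslow⟩ := exists_norm_slowFactor_le hA.le
  obtain ⟨K', hK', hexp⟩ := exists_exp_neg_le_inv_one_add_sq ha
  refine ⟨K * K' * 2, by positivity, fun w r t hr har ht => ?_⟩
  have hr0 : 0 < r := one_pos.trans_le hr
  have hx : cardyRate A / r ^ 2 ≤ 1 := (div_le_one (by positivity)).mpr har
  have hθ : |cardyRate A * t / r ^ 3| ≤ π := by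
    rw [le_div_iff₀ ha] at ht
    rw [abs_div, abs_mul, abs_of_pos ha, abs_of_pos (by positivity : 0 < r ^ 3),
      div_le_iff₀ (by positivity)]
    linarith
  rw [saddleIntegrand, norm_mul, norm_mul, norm_cexp_neg_mul_sq_div_contourPoint]
  calc _ ≤ (K' * (1 + t ^ 2)⁻¹) * ((K * (1 + |w|) ^ (-(3 / 2) : ℝ)) * 2) := by
        gcongr
        · exact hexp r t hr ht
        · exact hslow _ _ _ _ hx hθ
        · refine norm_one_sub_cexp_neg_le (modularDual_re_pos ?_).le
          rw [contourPoint_re]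
          positivity
    _ = _ := by ring

lemma tendsto_contourPoint_one (t : ℝ) :
    Tendsto (fun r => contourPoint 1 (t / r)) atTop (𝓝 1) := by
  have h := ((continuous_contourPoint 1).tendsto 0).comp
    (tendsto_const_nhds.div_atTop tendsto_id : Tendsto (fun r : ℝ => t / r) atTop (𝓝 0))
  simpa [contourPoint, Function.comp_def] using h

lemma tendsto_contourPoint_zero (a t : ℝ) :
    Tendsto (fun r : ℝ => contourPoint (a / r ^ 2) (a * t / r ^ 3)) atTop (𝓝 0) := by
  have hscale : Tendsto (fun r : ℝ => ((a / r ^ 2 : ℝ) : ℂ)) atTop (𝓝 ((0 : ℝ) : ℂ)) :=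
    (Complex.continuous_ofReal.tendsto 0).comp
      (tendsto_const_nhds.div_atTop (tendsto_pow_atTop two_ne_zero))
  have h := hscale.mul (tendsto_contourPoint_one t)
  rw [Complex.ofReal_zero, zero_mul] at h
  refine h.congr' ?_
  filter_upwards [eventually_ne_atTop 0] with r hr
  exact (contourPoint_rescale a t hr).symm

lemma tendsto_cexp_neg_modularDual_contourPoint {a : ℝ} (ha : 0 < a) (t : ℝ) :
    Tendsto (fun r : ℝ => Complex.exp (-modularDual (contourPoint (a / r ^ 2) (a * t / r ^ 3))))
      atTop (𝓝 0) := by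
  rw [tendsto_zero_iff_norm_tendsto_zero]
  simp_rw [Complex.norm_exp, Complex.neg_re]
  refine tendsto_exp_neg_atTop_nhds_zero.comp ?_
  have hratio : Tendsto (fun r : ℝ => t / r) atTop (𝓝 0) :=
    tendsto_const_nhds.div_atTop tendsto_id
  have hlim : Tendsto (fun r : ℝ => 4 * π ^ 2 / a * (1 + (t / r) ^ 2)⁻¹) atTop
      (𝓝 (4 * π ^ 2 / a)) := by
    simpa using (((hratio.pow 2).const_add 1).inv₀ (by norm_num)).const_mul (4 * π ^ 2 / a)
  refine ((tendsto_pow_atTop two_ne_zero).atTop_mul_pos (by positivity) hlim).congr' ?_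
  filter_upwards [eventually_gt_atTop 0] with r hr
  rw [modularDual_re, ← Complex.normSq_eq_norm_sq, Complex.normSq_apply, contourPoint_re,
    contourPoint_im]
  have : 0 < r ^ 2 + t ^ 2 := by positivity
  field_simp

lemma continuousAt_slowFactor (A : ℝ) {s : ℂ} (hs : 0 < s.re) :
    ContinuousAt (fun p : ℂ × ℂ => slowFactor A s p.1 p.2) (0, 1) := by
  have hs0 := ne_zero_of_re_pos hs
  have hquot : ContinuousAt (fun p : ℂ × ℂ => 4 * (π : ℂ) ^ 2 / ((s - p.1) * p.2)) (0, 1) :=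
    ContinuousAt.div (by fun_prop) (by fun_prop) (by simpa)
  have hdual : ContinuousAt (fun p : ℂ × ℂ => modularDual (s - p.1)) (0, 1) :=
    ContinuousAt.div (by fun_prop) (by fun_prop) (by simpa)
  have hsqrt : ContinuousAt
      (fun p : ℂ × ℂ => (4 * (π : ℂ) ^ 2 / ((s - p.1) * p.2)) ^ ((1 : ℂ) / 2)) (0, 1) :=
    hquot.cpow continuousAt_const (Or.inl (by simpa [modularDual] using modularDual_re_pos hs))
  unfold slowFactor
  fun_prop

lemma tendsto_saddleIntegrand {A : ℝ} (hA : 0 < A) {s : ℂ} (hs : 0 < s.re) (t : ℝ) :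
    Tendsto (fun r => saddleIntegrand A s r t) atTop
      (𝓝 (Complex.exp (-(cardyRate A * t ^ 2)) * slowFactor A s 0 1)) := by
  have hone := tendsto_contourPoint_one t
  have hslow := (continuousAt_slowFactor A hs).tendsto.comp
    ((tendsto_contourPoint_zero (cardyRate A) t).prodMk_nhds hone)
  have hgauss : Tendsto
      (fun r => Complex.exp (-(cardyRate A * t ^ 2 / contourPoint 1 (t / r)))) atTop
      (𝓝 (Complex.exp (-(cardyRate A * t ^ 2 / 1)))) :=
    (Complex.continuous_exp.tendsto _).comp (tendsto_const_nhds.div hone one_ne_zero).neg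
  have hvac := (tendsto_cexp_neg_modularDual_contourPoint (cardyRate_pos hA) t).const_sub 1
  simpa [saddleIntegrand, Function.comp_def] using hgauss.mul (hslow.mul hvac)

/-- The normalized contour integral of the vacuum kernel at spin `r⁴`. -/
def saddleIntegral (A w r : ℝ) : ℂ :=
  ∫ t in -(π * r ^ 3 / cardyRate A)..π * r ^ 3 / cardyRate A,
    saddleIntegrand A (laplaceLine w) r t

lemma integral_vacuumKernel {A : ℝ} (hA : 0 < A) {J : ℤ} (w : ℝ) {r : ℝ} (hr : 0 < r)
    (hJ : (J : ℝ) = r ^ 4) (har : cardyRate A ≤ r ^ 2) :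
    ∫ θ in -π..π, vacuumKernel A J (laplaceLine w) (contourPoint (cardyRate A / r ^ 2) θ) =
      (exp (2 * cardyRate A * r ^ 2) * (√(cardyRate A) / r ^ 2) : ℝ) * saddleIntegral A w r := by
  have ha := cardyRate_pos hA
  have hsubst := intervalIntegral.smul_integral_comp_mul_left (a := -(π * r ^ 3 / cardyRate A))
    (b := π * r ^ 3 / cardyRate A) (c := cardyRate A / r ^ 3)
    (f := fun θ => vacuumKernel A J (laplaceLine w) (contourPoint (cardyRate A / r ^ 2) θ))
  have hend : cardyRate A / r ^ 3 * (π * r ^ 3 / cardyRate A) = π := by field_simp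
  rw [mul_neg, hend] at hsubst
  have hline : cardyRate A / r ^ 2 < (laplaceLine w).re := by
    rw [laplaceLine_re]
    linarith [(div_le_one (by positivity)).mpr har]
  simp_rw [div_mul_eq_mul_div, vacuumKernel_eq_saddleIntegrand hA hr hJ hline] at hsubst
  have hconst : cardyRate A / r ^ 3 * (exp (2 * cardyRate A * r ^ 2) * (r / √(cardyRate A))) =
      exp (2 * cardyRate A * r ^ 2) * (√(cardyRate A) / r ^ 2) := by
    have hsq := sq_sqrt ha.le
    field_simp
    exact hsq.symm
  rw [← hsubst, intervalIntegral.integral_const_mul, Complex.real_smul, ← mul_assoc,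
    ← Complex.ofReal_mul, hconst, saddleIntegral]

lemma exists_norm_saddleIntegral_le {A : ℝ} (hA : 0 < A) :
    ∃ K, 0 < K ∧ ∀ w r : ℝ, 1 ≤ r → cardyRate A ≤ r ^ 2 →
      ‖saddleIntegral A w r‖ ≤ K * (1 + |w|) ^ (-(3 / 2) : ℝ) := by
  obtain ⟨K, hK, hbound⟩ := exists_norm_saddleIntegrand_le hA
  have ha := cardyRate_pos hA
  refine ⟨K * π, by positivity, fun w r hr har => ?_⟩
  have hint := integrable_inv_one_add_sq.const_mul (K * (1 + |w|) ^ (-(3 / 2) : ℝ))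
  rw [saddleIntegral, intervalIntegral.integral_of_le (neg_le_self (by positivity))]
  calc _ ≤ ∫ t in Set.Ioc (-(π * r ^ 3 / cardyRate A)) (π * r ^ 3 / cardyRate A),
          K * (1 + |w|) ^ (-(3 / 2) : ℝ) * (1 + t ^ 2)⁻¹ := by
        refine norm_integral_le_of_norm_le hint.integrableOn ?_
        filter_upwards [ae_restrict_mem measurableSet_Ioc] with t ht
        exact hbound w r t hr har (abs_le.mpr ⟨ht.1.le, ht.2⟩)
    _ ≤ ∫ t : ℝ, K * (1 + |w|) ^ (-(3 / 2) : ℝ) * (1 + t ^ 2)⁻¹ :=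
        setIntegral_le_integral hint (ae_of_all _ fun t => by positivity)
    _ = _ := by
        rw [integral_const_mul, integral_univ_inv_one_add_sq]
        ring

lemma measurable_saddleIntegrand (A : ℝ) (s : ℂ) (r : ℝ) :
    Measurable (saddleIntegrand A s r) := by
  unfold saddleIntegrand slowFactor modularDual contourPoint
  fun_prop

lemma integral_cexp_neg_mul_sq (a : ℝ) : ∫ t : ℝ, Complex.exp (-(a * t ^ 2)) = √(π / a) := by
  rw [← integral_gaussian, ← integral_complex_ofReal]
  push_cast
  simp only [neg_mul]

lemma tendsto_saddleIntegral {A : ℝ} (hA : 0 < A) (w : ℝ) :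
    Tendsto (saddleIntegral A w) atTop
      (𝓝 (√(π / cardyRate A) * slowFactor A (laplaceLine w) 0 1)) := by
  obtain ⟨K, hK, hbound⟩ := exists_norm_saddleIntegrand_le hA
  have ha := cardyRate_pos hA
  set R : ℝ → ℝ := fun r => π * r ^ 3 / cardyRate A
  have hR : Tendsto R atTop atTop :=
    ((tendsto_pow_atTop three_ne_zero).const_mul_atTop pi_pos).atTop_div_const ha
  have hindicator : ∀ᶠ r in atTop, ∫ t, (Set.Ioc (-R r) (R r)).indicator
      (saddleIntegrand A (laplaceLine w) r) t = saddleIntegral A w r := by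
    filter_upwards [hR.eventually_ge_atTop 0] with r hr
    rw [integral_indicator measurableSet_Ioc, saddleIntegral,
      intervalIntegral.integral_of_le (neg_le_self hr)]
  rw [← integral_cexp_neg_mul_sq, ← integral_mul_const]
  refine Tendsto.congr' hindicator (tendsto_integral_filter_of_dominated_convergence
    (fun t => K * (1 + |w|) ^ (-(3 / 2) : ℝ) * (1 + t ^ 2)⁻¹)
    (Eventually.of_forall fun r =>
      ((measurable_saddleIntegrand A _ r).indicator measurableSet_Ioc).aestronglyMeasurable)
    ?_ (integrable_inv_one_add_sq.const_mul _) (ae_of_all _ fun t => ?_))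
  · filter_upwards [eventually_ge_atTop 1, eventually_ge_atTop (cardyRate A)] with r hr har
    refine ae_of_all _ fun t => ?_
    by_cases ht : t ∈ Set.Ioc (-R r) (R r)
    · rw [Set.indicator_of_mem ht]
      exact hbound w r t hr (by nlinarith) (abs_le.mpr ⟨ht.1.le, ht.2⟩)
    · rw [Set.indicator_of_notMem ht, norm_zero]
      positivity
  · refine (tendsto_saddleIntegrand hA (by simp) t).congr' ?_
    filter_upwards [hR.eventually_gt_atTop |t|] with r hr
    have hmem := abs_lt.mp hr
    rw [Set.indicator_of_mem (show t ∈ Set.Ioc (-R r) (R r) from ⟨hmem.1, hmem.2.le⟩)]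

/-! ### Convergence of the rescaled Laplace transforms -/

/-- The fourth root `n^{1/4}`: the reciprocal width of the saddle at spin `n`, in units where the
contour sits at `cardyRate A / √n`. -/
def fourthRoot (n : ℕ) : ℝ := √√n

lemma fourthRoot_sq (n : ℕ) : fourthRoot n ^ 2 = √n := sq_sqrt (sqrt_nonneg _)

lemma fourthRoot_pow_four (n : ℕ) : fourthRoot n ^ 4 = n := by
  rw [show fourthRoot n ^ 4 = (fourthRoot n ^ 2) ^ 2 by ring, fourthRoot_sq,
    sq_sqrt (Nat.cast_nonneg n)]

lemma tendsto_sqrt_natCast : Tendsto (fun n : ℕ => √(n : ℝ)) atTop atTop :=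
  tendsto_sqrt_atTop.comp tendsto_natCast_atTop_atTop

lemma tendsto_fourthRoot : Tendsto fourthRoot atTop atTop :=
  tendsto_sqrt_atTop.comp tendsto_sqrt_natCast

/-- The factor `√2 n^{1/2} e^{-4π√(A n)}` that normalizes the counting of operators of spin `n`. -/
def cardyScale (A : ℝ) (n : ℕ) : ℝ := √2 * √n * exp (-(2 * cardyRate A * √n))

lemma cardyScale_nonneg (A : ℝ) (n : ℕ) : 0 ≤ cardyScale A n := by
  unfold cardyScale
  positivity

/-- The Laplace transform of the spin-`n` spectrum on the line `re s = 2`, in Cardy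
normalization. -/
def cardyTransform (A : ℝ) (ν : ℤ → Measure ℝ) (n : ℕ) (w : ℝ) : ℂ :=
  cardyScale A n * laplaceTransform (ν n) (laplaceLine w)

/-- The coefficient of `saddleIntegral` in the leading term of `cardyTransform`. -/
def saddleConst (A : ℝ) : ℝ := √2 * √(cardyRate A) / (2 * π)

lemma saddleConst_nonneg (A : ℝ) : 0 ≤ saddleConst A := by
  unfold saddleConst
  positivity

lemma saddleConst_eq (A : ℝ) {n : ℕ} (hn : n ≠ 0) :
    saddleConst A = cardyScale A n / (2 * π) *
      (exp (2 * cardyRate A * √n) * (√(cardyRate A) / √n)) := by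
  rw [saddleConst, cardyScale, exp_neg]
  field_simp

/-- The pointwise limit of `cardyTransform`, which is the Laplace transform of `rhoc A` on the line
`re s = 2`. -/
def limitTransform (A w : ℝ) : ℂ := ((√(2 * π))⁻¹ : ℝ) * slowFactor A (laplaceLine w) 0 1

lemma limitTransform_eq {A : ℝ} (hA : 0 < A) (w : ℝ) :
    limitTransform A w =
      saddleConst A * (√(π / cardyRate A) * slowFactor A (laplaceLine w) 0 1) := by
  have hrate := sqrt_pos.mpr (cardyRate_pos hA)
  rw [limitTransform, ← mul_assoc, ← Complex.ofReal_mul]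
  congr 2
  rw [saddleConst, sqrt_div pi_pos.le, sqrt_mul zero_le_two]
  field_simp
  rw [sq_sqrt pi_pos.le, sq_sqrt zero_le_two]

lemma exists_norm_limitTransform_le {A : ℝ} (hA : 0 ≤ A) :
    ∃ K, 0 < K ∧ ∀ w, ‖limitTransform A w‖ ≤ K * (1 + |w|) ^ (-(3 / 2) : ℝ) := by
  obtain ⟨K, hK, hbound⟩ := exists_norm_slowFactor_le hA
  refine ⟨(√(2 * π))⁻¹ * K, by positivity, fun w => ?_⟩
  have h := hbound w 0 0 0 zero_le_one (by simpa using pi_pos.le)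
  rw [show contourPoint 0 0 = 0 by simp [contourPoint],
    show contourPoint 1 0 = 1 by simp [contourPoint]] at h
  rw [limitTransform, norm_mul, Complex.norm_real, norm_of_nonneg (by positivity), mul_assoc]
  gcongr

lemma pow_three_le_exp {c y : ℝ} (hc : 0 < c) (hy : 0 ≤ y) : y ^ 3 ≤ 6 / c ^ 3 * exp (c * y) :=
  calc y ^ 3 = 6 / c ^ 3 * ((c * y) ^ 3 / 6) := by field_simp
    _ ≤ 6 / c ^ 3 * exp (c * y) := by
        gcongr
        exact pow_three_div_six_le_exp (by positivity)

lemma exists_cardy_error_le {a κ : ℝ} (ha : 0 < a) (hκ : κ < a ^ 2) :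
    ∃ K c, 0 < K ∧ 0 < c ∧ ∀ y, 0 < y →
      y * exp (-(2 * a * y)) * ((a / y)⁻¹ ^ 2 * exp (κ / (a / y)) * exp (a / y * y ^ 2)) ≤
        K * exp (-(c * y)) := by
  obtain ⟨c, hc⟩ : ∃ c, c = (a - κ / a) / 2 := ⟨_, rfl⟩
  have hc0 : 0 < c := by
    have : κ / a < a := by rwa [div_lt_iff₀ ha, ← sq]
    linarith
  refine ⟨6 / c ^ 3 / a ^ 2, c, by positivity, hc0, fun y hy => ?_⟩
  have hexp : exp (-(2 * a * y)) * exp (κ / (a / y)) * exp (a / y * y ^ 2) =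
      exp (-(2 * c * y)) := by
    rw [← exp_add, ← exp_add, hc]
    congr 1
    field_simp
    ring
  calc _ = y ^ 3 / a ^ 2 * exp (-(2 * c * y)) := by
        rw [← hexp]
        field_simp
    _ ≤ 6 / c ^ 3 * exp (c * y) / a ^ 2 * exp (-(2 * c * y)) := by
        gcongr
        exact pow_three_le_exp hc0 hy.le
    _ = 6 / c ^ 3 / a ^ 2 * exp (-(c * y)) := by
        rw [show -(c * y) = c * y + -(2 * c * y) by ring, exp_add]
        ring

lemma norm_laplaceTransform_le (μ : Measure ℝ) (s : ℂ) :
    ‖laplaceTransform μ s‖ ≤ ‖laplaceTransform μ (s.re : ℂ)‖ := by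
  have hreal : laplaceTransform μ (s.re : ℂ) = ((∫ h, exp (-(s.re * h)) ∂μ : ℝ) : ℂ) := by
    rw [laplaceTransform, ← integral_complex_ofReal]
    simp
  rw [hreal, Complex.norm_real, norm_of_nonneg (integral_nonneg fun h => (exp_pos _).le)]
  refine (norm_integral_le_integral_norm _).trans_eq (integral_congr_ae (ae_of_all _ fun h => ?_))
  simp [Complex.norm_exp]

lemma norm_cardyTransform_le (A : ℝ) (ν : ℤ → Measure ℝ) (n : ℕ) (w : ℝ) :
    ‖cardyTransform A ν n w‖ ≤ ‖cardyTransform A ν n 0‖ := by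
  have hline : ((laplaceLine w).re : ℂ) = laplaceLine 0 := by simp [laplaceLine]
  rw [cardyTransform, cardyTransform, norm_mul, norm_mul, ← hline]
  gcongr
  exact norm_laplaceTransform_le _ _

namespace IsSpectrum

variable {A T : ℝ} {ν : ℤ → Measure ℝ}

lemma exists_norm_cardyTransform_sub_saddleIntegral_le (hν : IsSpectrum T ν)
    (hmod : ModularInvariant A ν) (hA : 0 < A) (hT : 0 < T) :
    ∃ C c, 0 < C ∧ 0 < c ∧ ∀ (n : ℕ) (w : ℝ), n ≠ 0 → cardyRate A ≤ √n →
      ‖cardyTransform A ν n w - saddleConst A * saddleIntegral A w (fourthRoot n)‖ ≤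
        C * exp (2 * (A + 1) * w ^ 2) * exp (-(c * √n)) := by
  obtain ⟨C, hC, hbound⟩ :=
    hν.exists_norm_laplaceTransform_sub_integral_vacuumKernel_le hmod hA hT.le
  obtain ⟨K, c, hK, hc, herror⟩ := exists_cardy_error_le (cardyRate_pos hA)
    ((dualRate_lt hA hT).trans_eq (cardyRate_sq hA.le).symm)
  refine ⟨√2 / (2 * π) * C * K, c, by positivity, hc, fun n w hn han => ?_⟩
  have hy : 0 < √(n : ℝ) := sqrt_pos.mpr (Nat.cast_pos.mpr (Nat.pos_of_ne_zero hn))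
  have hr : 0 < fourthRoot n := sqrt_pos.mpr hy
  have hkernel := integral_vacuumKernel hA (J := n) w hr
    (by rw [fourthRoot_pow_four, Int.cast_natCast]) (by rwa [fourthRoot_sq])
  have h := hbound n (cardyRate A / √n) w (div_pos (cardyRate_pos hA) hy) ((div_le_one hy).mpr han)
  rw [fourthRoot_sq] at hkernel
  rw [hkernel, Int.cast_natCast, ← sq_sqrt (Nat.cast_nonneg n), sqrt_sq hy.le] at h
  have hfactor : cardyTransform A ν n w - saddleConst A * saddleIntegral A w (fourthRoot n) =
      (cardyScale A n / (2 * π) : ℝ) * (2 * π * laplaceTransform (ν n) (laplaceLine w) -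
        (exp (2 * cardyRate A * √n) * (√(cardyRate A) / √n) : ℝ) *
          saddleIntegral A w (fourthRoot n)) := by
    have hπ : (π : ℂ) ≠ 0 := Complex.ofReal_ne_zero.mpr pi_ne_zero
    rw [cardyTransform, saddleConst_eq A hn]
    push_cast
    field_simp
  have hscale : 0 ≤ cardyScale A n / (2 * π) :=
    div_nonneg (cardyScale_nonneg A n) (by positivity)
  rw [hfactor, norm_mul, Complex.norm_real, norm_of_nonneg hscale]
  calc _ ≤ _ := mul_le_mul_of_nonneg_left h hscale
    _ = √2 / (2 * π) * C * exp (2 * (A + 1) * w ^ 2) * (√n * exp (-(2 * cardyRate A * √n)) *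
          ((cardyRate A / √n)⁻¹ ^ 2 * exp (dualRate A T / (cardyRate A / √n)) *
            exp (cardyRate A / √n * √n ^ 2))) := by
        rw [cardyScale]
        ring
    _ ≤ √2 / (2 * π) * C * exp (2 * (A + 1) * w ^ 2) * (K * exp (-(c * √n))) :=
        mul_le_mul_of_nonneg_left (herror _ hy) (by positivity)
    _ = _ := by ring

theorem tendsto_cardyTransform (hν : IsSpectrum T ν) (hmod : ModularInvariant A ν) (hA : 0 < A)
    (hT : 0 < T) (w : ℝ) :
    Tendsto (fun n => cardyTransform A ν n w) atTop (𝓝 (limitTransform A w)) := by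
  obtain ⟨C, c, -, hc, hbound⟩ :=
    hν.exists_norm_cardyTransform_sub_saddleIntegral_le hmod hA hT
  have hsaddle : Tendsto (fun n => saddleConst A * saddleIntegral A w (fourthRoot n)) atTop
      (𝓝 (limitTransform A w)) := by
    rw [limitTransform_eq hA]
    exact ((tendsto_saddleIntegral hA w).comp tendsto_fourthRoot).const_mul _
  have hdecay : Tendsto (fun n : ℕ => C * exp (2 * (A + 1) * w ^ 2) * exp (-(c * √n))) atTop
      (𝓝 0) := by
    simpa [Function.comp_def] using (tendsto_exp_neg_atTop_nhds_zero.comp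
      (tendsto_sqrt_natCast.const_mul_atTop hc)).const_mul (C * exp (2 * (A + 1) * w ^ 2))
  have herror : Tendsto (fun n => cardyTransform A ν n w -
      saddleConst A * saddleIntegral A w (fourthRoot n)) atTop (𝓝 0) := by
    refine squeeze_zero_norm' ?_ hdecay
    filter_upwards [eventually_ne_atTop 0, tendsto_sqrt_natCast.eventually_ge_atTop (cardyRate A)]
      with n hn han using hbound n w hn han
  simpa using herror.add hsaddle

theorem exists_norm_cardyTransform_le (hν : IsSpectrum T ν) (hmod : ModularInvariant A ν)
    (hA : 0 < A) (hT : 0 < T) :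
    ∃ C c, 0 < C ∧ 0 < c ∧ ∀ᶠ n : ℕ in atTop, ∀ w, ‖cardyTransform A ν n w‖ ≤
      C * (1 + |w|) ^ (-(3 / 2) : ℝ) + C * exp (2 * (A + 1) * w ^ 2) * exp (-(c * √n)) := by
  obtain ⟨C, c, hC, hc, herror⟩ :=
    hν.exists_norm_cardyTransform_sub_saddleIntegral_le hmod hA hT
  obtain ⟨K, hK, hsaddle⟩ := exists_norm_saddleIntegral_le hA
  have hconst := saddleConst_nonneg A
  refine ⟨C + saddleConst A * K, c, by positivity, hc, ?_⟩
  filter_upwards [eventually_ne_atTop 0, tendsto_fourthRoot.eventually_ge_atTop 1,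
    tendsto_sqrt_natCast.eventually_ge_atTop (cardyRate A)] with n hn hr han w
  calc ‖cardyTransform A ν n w‖
      ≤ ‖saddleConst A * saddleIntegral A w (fourthRoot n)‖ +
          ‖cardyTransform A ν n w - saddleConst A * saddleIntegral A w (fourthRoot n)‖ :=
        norm_le_insert' _ _
    _ ≤ saddleConst A * (K * (1 + |w|) ^ (-(3 / 2) : ℝ)) +
          C * exp (2 * (A + 1) * w ^ 2) * exp (-(c * √n)) := by
        rw [norm_mul, Complex.norm_real, norm_of_nonneg hconst]
        exact add_le_add (mul_le_mul_of_nonneg_left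
          (hsaddle w _ hr (by rwa [fourthRoot_sq])) hconst) (herror n w hn han)
    _ ≤ _ := by
        rw [← mul_assoc]
        gcongr <;> nlinarith

theorem exists_norm_cardyTransform_le_const (hν : IsSpectrum T ν) (hmod : ModularInvariant A ν)
    (hA : 0 < A) (hT : 0 < T) :
    ∃ C, 0 < C ∧ ∀ᶠ n : ℕ in atTop, ∀ w, ‖cardyTransform A ν n w‖ ≤ C := by
  refine ⟨‖limitTransform A 0‖ + 1, by positivity, ?_⟩
  filter_upwards [(hν.tendsto_cardyTransform hmod hA hT 0).norm.eventually_le_const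
    (lt_add_one ‖limitTransform A 0‖)] with n hn w
  exact (norm_cardyTransform_le A ν n w).trans hn

end IsSpectrum

/-! ### Domination by Gaussian windows of width `N ^ (-γ)`, `γ < 1 / 4` -/

lemma exists_exp_neg_mul_rpow_le {p η : ℝ} (hp : 0 < p) (hη : 0 < η) {k : ℝ} (hk : 0 ≤ k) :
    ∃ K, ∀ x, 0 ≤ x → exp (-(p * x ^ η)) ≤ K * (1 + x) ^ (-k) := by
  obtain ⟨m, hm⟩ := exists_nat_ge (k / η)
  rw [div_le_iff₀' hη] at hm
  refine ⟨2 ^ k * (1 + m.factorial / p ^ m), fun x hx => ?_⟩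
  have hone : 1 ≤ exp (p * x ^ η) := one_le_exp (by positivity)
  have hpow : x ^ (η * m) ≤ m.factorial / p ^ m * exp (p * x ^ η) := by
    have h := pow_div_factorial_le_exp (p * x ^ η) (by positivity) m
    rw [mul_pow, ← rpow_mul_natCast hx, div_le_iff₀ (by positivity)] at h
    rw [div_mul_eq_mul_div, le_div_iff₀ (by positivity)]
    linarith
  have hmax : max 1 x ^ k ≤ 1 + x ^ (η * m) := by
    rcases le_total x 1 with hx1 | hx1
    · rw [max_eq_left hx1, one_rpow]
      exact le_add_of_nonneg_right (by positivity)
    · rw [max_eq_right hx1]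
      exact (rpow_le_rpow_of_exponent_le hx1 hm).trans (le_add_of_nonneg_left zero_le_one)
  have hbase : 1 + x ≤ 2 * max 1 x := by linarith [le_max_left 1 x, le_max_right 1 x]
  rw [rpow_neg (by positivity), exp_neg, ← div_eq_mul_inv, le_div_iff₀ (by positivity),
    ← div_eq_inv_mul, div_le_iff₀ (exp_pos _)]
  calc (1 + x) ^ k ≤ (2 * max 1 x) ^ k := by gcongr
    _ = 2 ^ k * max 1 x ^ k := mul_rpow zero_le_two (by positivity)
    _ ≤ 2 ^ k * (1 * exp (p * x ^ η) + m.factorial / p ^ m * exp (p * x ^ η)) := by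
        gcongr
        linarith
    _ = _ := by ring

lemma rpow_mul_abs_rpow_le_mul_rpow_neg_sq {q N w γ : ℝ} (hq : 0 < q) (hN : 0 < N) (hγ : 0 ≤ γ)
    (hw : q * √N ≤ w ^ 2) :
    q ^ (4 * γ) * |w| ^ (2 * (1 - 4 * γ)) ≤ (w * N ^ (-γ)) ^ 2 := by
  have hw0 : 0 < w ^ 2 := lt_of_lt_of_le (by positivity) hw
  have hroot : (q * √N) ^ (4 * γ) = q ^ (4 * γ) * (N ^ γ) ^ 2 := by
    rw [mul_rpow hq.le (sqrt_nonneg N), sqrt_eq_rpow, ← rpow_mul hN.le, ← rpow_mul_natCast hN.le]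
    congr 2
    push_cast
    ring
  have hmono : q ^ (4 * γ) * (N ^ γ) ^ 2 ≤ (w ^ 2) ^ (4 * γ) := by
    rw [← hroot]
    gcongr
  rw [rpow_mul (abs_nonneg w), rpow_two, sq_abs, rpow_sub hw0, rpow_one, rpow_neg hN.le, mul_pow,
    inv_pow, ← div_eq_mul_inv, mul_div_assoc', div_le_div_iff₀ (by positivity) (by positivity)]
  calc _ = w ^ 2 * (q ^ (4 * γ) * (N ^ γ) ^ 2) := by ring
    _ ≤ _ := by gcongr

lemma exp_neg_sub_sq_div_two_le (u ξ : ℝ) :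
    exp (-(u - ξ) ^ 2 / 2) ≤ exp (ξ ^ 2 / 2) * exp (-(u ^ 2 / 4)) := by
  rw [← exp_add, exp_le_exp]
  nlinarith [sq_nonneg (u - 2 * ξ)]

/- The exponentially growing error is harmless for `w² ≲ √N`; beyond that, the window itself is
small because `(w N ^ (-γ))²` dominates a positive power of `|w|`. -/
lemma exists_gaussian_mul_le {γ : ℝ} (hγ : 0 ≤ γ) (hγ' : γ < 1 / 4) (ξ : ℝ) {k : ℝ} (hk : 0 ≤ k)
    {B C D c : ℝ} (hB : 0 < B) (hC : 0 < C) (hD : 0 < D) (hc : 0 < c) :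
    ∃ K, ∀ N w y : ℝ, 0 < N → 0 ≤ y → y ≤ B →
      y ≤ C * (1 + |w|) ^ (-k) + C * exp (D * w ^ 2) * exp (-(c * √N)) →
      exp (-(w * N ^ (-γ) - ξ) ^ 2 / 2) * y ≤ K * (1 + |w|) ^ (-k) := by
  obtain ⟨q, hq⟩ : ∃ q, q = c / (2 * D) := ⟨_, rfl⟩
  have hq0 : 0 < q := by rw [hq]; positivity
  obtain ⟨K₁, hinner⟩ := exists_exp_neg_mul_rpow_le hD two_pos hk
  obtain ⟨K₂, houter⟩ := exists_exp_neg_mul_rpow_le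
    (show 0 < q ^ (4 * γ) / 4 by positivity) (show 0 < 2 * (1 - 4 * γ) by linarith) hk
  refine ⟨max (C + C * K₁) (exp (ξ ^ 2 / 2) * K₂ * B), fun N w y hN hy hyB hyC => ?_⟩
  rcases le_total (w ^ 2) (q * √N) with hw | hw
  · have herror : exp (D * w ^ 2) * exp (-(c * √N)) ≤ K₁ * (1 + |w|) ^ (-k) := by
      refine le_trans ?_ (hinner |w| (abs_nonneg w))
      rw [← exp_add, exp_le_exp, rpow_two, sq_abs]
      have : 2 * D * w ^ 2 ≤ c * √N := by
        calc 2 * D * w ^ 2 ≤ 2 * D * (q * √N) := by gcongr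
          _ = c * √N := by rw [hq]; field_simp
      linarith
    calc _ ≤ 1 * (C * (1 + |w|) ^ (-k) + C * (K₁ * (1 + |w|) ^ (-k))) := by
          refine mul_le_mul ?_ (hyC.trans ?_) hy zero_le_one
          · rw [exp_le_one_iff]
            linarith [sq_nonneg (w * N ^ (-γ) - ξ)]
          · rw [mul_assoc C (exp _)]
            gcongr
      _ = (C + C * K₁) * (1 + |w|) ^ (-k) := by ring
      _ ≤ _ := by gcongr; exact le_max_left _ _
  · calc _ ≤ exp (ξ ^ 2 / 2) * exp (-(q ^ (4 * γ) / 4 * |w| ^ (2 * (1 - 4 * γ)))) * B := by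
          gcongr
          refine (exp_neg_sub_sq_div_two_le _ ξ).trans ?_
          gcongr
          linarith [rpow_mul_abs_rpow_le_mul_rpow_neg_sq hq0 hN hγ hw]
      _ ≤ exp (ξ ^ 2 / 2) * (K₂ * (1 + |w|) ^ (-k)) * B := by
          gcongr
          exact houter |w| (abs_nonneg w)
      _ = exp (ξ ^ 2 / 2) * K₂ * B * (1 + |w|) ^ (-k) := by ring
      _ ≤ _ := by gcongr; exact le_max_right _ _

lemma integrable_one_add_abs_rpow_neg {k : ℝ} (hk : 1 < k) :
    Integrable fun w : ℝ => (1 + |w|) ^ (-k) := by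
  simpa using integrable_one_add_norm (E := ℝ) (μ := volume) (r := k) (by simpa)

theorem IsSpectrum.exists_integrable_gaussian_mul_norm_cardyTransform_le {A T : ℝ}
    {ν : ℤ → Measure ℝ} (hν : IsSpectrum T ν) (hmod : ModularInvariant A ν) (hA : 0 < A)
    (hT : 0 < T) {γ : ℝ} (hγ : 0 ≤ γ) (hγ' : γ < 1 / 4) (ξ : ℝ) :
    ∃ bound : ℝ → ℝ, Integrable bound ∧ ∀ᶠ n : ℕ in atTop, ∀ w,
      exp (-(w * (n : ℝ) ^ (-γ) - ξ) ^ 2 / 2) * ‖cardyTransform A ν n w‖ ≤ bound w := by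
  obtain ⟨B, hB, hbdd⟩ := hν.exists_norm_cardyTransform_le_const hmod hA hT
  obtain ⟨C, c, hC, hc, hdecay⟩ := hν.exists_norm_cardyTransform_le hmod hA hT
  obtain ⟨K, hK⟩ := exists_gaussian_mul_le hγ hγ' ξ (k := 3 / 2) (by norm_num) hB hC
    (show 0 < 2 * (A + 1) by linarith) hc
  refine ⟨_, (integrable_one_add_abs_rpow_neg (k := 3 / 2) (by norm_num)).const_mul K, ?_⟩
  filter_upwards [hbdd, hdecay, eventually_gt_atTop 0] with n hnB hnC hn w
  exact hK n w _ (Nat.cast_pos.mpr hn) (norm_nonneg _) (hnB w) (hnC w)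

/-! ### The crossed-channel density and its Laplace transform -/

/-- The bracket `cosh(4π√A y) - cosh(4π√(A-1) y)` of `ρ_c` in the variable `y = √(h - A)`, the
second term being read as a cosine for `A < 1`. -/
def coshDiff (A y : ℝ) : ℝ :=
  cosh (4 * π * √A * y) -
    (if 1 ≤ A then cosh (4 * π * √(A - 1) * y) else cos (4 * π * √(1 - A) * y))

lemma coshDiff_zero (A : ℝ) : coshDiff A 0 = 0 := by
  unfold coshDiff
  split_ifs <;> simp

lemma coshDiff_neg (A y : ℝ) : coshDiff A (-y) = coshDiff A y := by simp [coshDiff]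

lemma continuous_coshDiff (A : ℝ) : Continuous (coshDiff A) := by
  unfold coshDiff
  split_ifs <;> fun_prop

lemma hasDerivAt_coshDiff_zero (A : ℝ) : HasDerivAt (coshDiff A) 0 0 := by
  have hcosh (c : ℝ) : HasDerivAt (fun y => cosh (c * y)) 0 0 := by
    simpa using ((hasDerivAt_id (0 : ℝ)).const_mul c).cosh
  have hcos (c : ℝ) : HasDerivAt (fun y => cos (c * y)) 0 0 := by
    simpa using ((hasDerivAt_id (0 : ℝ)).const_mul c).cos
  unfold coshDiff
  split_ifs
  · simpa using (hcosh _).fun_sub (hcosh _)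
  · simpa using (hcosh _).fun_sub (hcos _)

lemma coshDiff_nonneg (A y : ℝ) : 0 ≤ coshDiff A y := by
  rw [coshDiff, sub_nonneg]
  split_ifs
  · rw [cosh_le_cosh, abs_mul _ y, abs_mul _ y,
      abs_of_nonneg (show 0 ≤ 4 * π * √(A - 1) by positivity),
      abs_of_nonneg (show 0 ≤ 4 * π * √A by positivity)]
    gcongr
    linarith
  · exact (cos_le_one _).trans (one_le_cosh _)

/- At `y = 0` the junk value `coshDiff A 0 / 0 = 0` is the right one, since `coshDiff A` vanishes to
second order there. -/
lemma continuous_coshDiff_div (A : ℝ) : Continuous fun y => coshDiff A y / y := by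
  refine continuous_iff_continuousAt.mpr fun y => ?_
  rcases eq_or_ne y 0 with rfl | hy
  · have hslope : slope (coshDiff A) 0 = fun y => coshDiff A y / y := by
      ext y
      rw [slope_def_field, coshDiff_zero, sub_zero, sub_zero]
    have h := hasDerivAt_iff_tendsto_slope.mp (hasDerivAt_coshDiff_zero A)
    rw [hslope] at h
    rw [← continuousWithinAt_compl_self]
    simpa [ContinuousWithinAt] using h
  · exact (continuous_coshDiff A).continuousAt.div continuousAt_id hy

lemma rhoc_of_le {A h : ℝ} (hh : h ≤ A) : rhoc A h = 0 := if_pos hh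

lemma rhoc_eq_coshDiff {A : ℝ} (hA : 0 ≤ A) (h : ℝ) :
    rhoc A h = √2 * (coshDiff A √(h - A) / √(h - A)) := by
  rcases le_or_gt h A with hh | hh
  · rw [rhoc_of_le hh, sqrt_eq_zero_of_nonpos (show h - A ≤ 0 by linarith), div_zero, mul_zero]
  · rw [rhoc, if_neg hh.not_ge, coshDiff, sqrt_div zero_le_two, sqrt_mul hA]
    split_ifs <;> rw [sqrt_mul (by linarith)] <;> ring_nf

lemma continuous_rhoc {A : ℝ} (hA : 0 ≤ A) : Continuous (rhoc A) := by
  rw [funext (rhoc_eq_coshDiff hA)]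
  exact ((continuous_coshDiff_div A).comp (by fun_prop : Continuous fun h => √(h - A))).const_mul _

lemma rhoc_nonneg {A : ℝ} (hA : 0 ≤ A) (h : ℝ) : 0 ≤ rhoc A h := by
  rw [rhoc_eq_coshDiff hA]
  have := coshDiff_nonneg A √(h - A)
  positivity

lemma cexp_mul_cosh (x z : ℂ) :
    Complex.exp x * Complex.cosh z =
      1 / 2 * (Complex.exp (x + z + 0) + Complex.exp (x + -z + 0)) := by
  simp only [Complex.cosh, add_zero, Complex.exp_add]
  ring

lemma integrable_cexp_neg_mul_sq_mul_cosh {s : ℂ} (hs : 0 < s.re) (b : ℂ) :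
    Integrable fun y : ℝ => Complex.exp (-s * y ^ 2) * Complex.cosh (b * y) := by
  have hs' : (-s).re < 0 := by simpa
  simp_rw [cexp_mul_cosh, ← neg_mul b]
  exact ((integrable_cexp_quadratic' hs' b 0).add
    (integrable_cexp_quadratic' hs' (-b) 0)).const_mul _

lemma integral_cexp_neg_mul_sq_mul_cosh {s : ℂ} (hs : 0 < s.re) (b : ℂ) :
    ∫ y : ℝ, Complex.exp (-s * y ^ 2) * Complex.cosh (b * y) =
      (π / s) ^ ((1 : ℂ) / 2) * Complex.exp (b ^ 2 / (4 * s)) := by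
  have hs' : (-s).re < 0 := by simpa
  have hexponent : (0 : ℂ) - b ^ 2 / (4 * -s) = b ^ 2 / (4 * s) := by
    rw [mul_neg, div_neg, sub_neg_eq_add, zero_add]
  simp_rw [cexp_mul_cosh, ← neg_mul b]
  rw [integral_const_mul, integral_add (integrable_cexp_quadratic' hs' b 0)
    (integrable_cexp_quadratic' hs' (-b) 0), integral_cexp_quadratic hs',
    integral_cexp_quadratic hs', neg_neg, neg_sq, hexponent]
  ring

lemma exists_ofReal_coshDiff_eq (A : ℝ) :
    ∃ b : ℂ, b ^ 2 = 16 * (π : ℂ) ^ 2 * (A - 1) ∧ ∀ y : ℝ,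
      (coshDiff A y : ℂ) =
        Complex.cosh ((4 * π * √A : ℝ) * y) - Complex.cosh (b * y) := by
  rcases le_or_gt 1 A with hA | hA
  · refine ⟨(4 * π * √(A - 1) : ℝ), ?_, fun y => ?_⟩
    · rw [← Complex.ofReal_pow, mul_pow, sq_sqrt (by linarith)]
      push_cast
      ring
    · rw [coshDiff, if_pos hA]
      push_cast
      ring
  · refine ⟨(4 * π * √(1 - A) : ℝ) * Complex.I, ?_, fun y => ?_⟩
    · rw [mul_pow, Complex.I_sq, ← Complex.ofReal_pow, mul_pow, sq_sqrt (by linarith)]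
      push_cast
      ring
    · rw [coshDiff, if_neg hA.not_ge, mul_right_comm _ Complex.I, Complex.cosh_mul_I]
      push_cast
      ring

lemma integrable_cexp_neg_mul_sq_mul_coshDiff (A : ℝ) {s : ℂ} (hs : 0 < s.re) :
    Integrable fun y : ℝ => Complex.exp (-s * y ^ 2) * coshDiff A y := by
  obtain ⟨b, -, hb⟩ := exists_ofReal_coshDiff_eq A
  simp_rw [hb, mul_sub]
  exact (integrable_cexp_neg_mul_sq_mul_cosh hs _).sub (integrable_cexp_neg_mul_sq_mul_cosh hs b)

lemma integral_cexp_neg_mul_sq_mul_coshDiff {A : ℝ} (hA : 0 ≤ A) {s : ℂ} (hs : 0 < s.re) :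
    ∫ y : ℝ, Complex.exp (-s * y ^ 2) * coshDiff A y =
      (π / s) ^ ((1 : ℂ) / 2) *
        (Complex.exp (A * modularDual s) * (1 - Complex.exp (-modularDual s))) := by
  obtain ⟨b, hbsq, hb⟩ := exists_ofReal_coshDiff_eq A
  have hasq : ((4 * π * √A : ℝ) : ℂ) ^ 2 = 16 * (π : ℂ) ^ 2 * A := by
    rw [← Complex.ofReal_pow, mul_pow, sq_sqrt hA]
    push_cast
    ring
  have hs0 : s ≠ 0 := ne_zero_of_re_pos hs
  simp_rw [hb, mul_sub]
  rw [integral_sub (integrable_cexp_neg_mul_sq_mul_cosh hs _)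
    (integrable_cexp_neg_mul_sq_mul_cosh hs b), integral_cexp_neg_mul_sq_mul_cosh hs,
    integral_cexp_neg_mul_sq_mul_cosh hs, hasq, hbsq, mul_one, ← Complex.exp_add]
  congr 3 <;> rw [modularDual] <;> field_simp <;> ring

section AddSq

variable {E : Type*} [NormedAddCommGroup E] [NormedSpace ℝ E]

lemma image_add_sq_Ioi (A : ℝ) : (fun y : ℝ => A + y ^ 2) '' Set.Ioi 0 = Set.Ioi A := by
  ext h
  simp only [Set.mem_image, Set.mem_Ioi]
  constructor
  · rintro ⟨y, hy, rfl⟩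
    exact lt_add_of_pos_right A (pow_pos hy 2)
  · intro hh
    exact ⟨√(h - A), sqrt_pos.mpr (by linarith), by rw [sq_sqrt (by linarith)]; ring⟩

lemma hasDerivWithinAt_add_sq (A x : ℝ) (S : Set ℝ) :
    HasDerivWithinAt (fun y : ℝ => A + y ^ 2) (2 * x) S x := by
  simpa using (((hasDerivAt_id x).pow 2).const_add A).hasDerivWithinAt

lemma injOn_add_sq_Ioi (A : ℝ) : Set.InjOn (fun y : ℝ => A + y ^ 2) (Set.Ioi 0) :=
  fun _ hx _ hy hxy =>
    (pow_left_inj₀ (le_of_lt hx) (le_of_lt hy) two_ne_zero).mp (add_left_cancel hxy)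

lemma integrableOn_Ioi_iff_comp_add_sq (A : ℝ) (g : ℝ → E) :
    IntegrableOn g (Set.Ioi A) ↔ IntegrableOn (fun y => |2 * y| • g (A + y ^ 2)) (Set.Ioi 0) := by
  rw [← image_add_sq_Ioi A, integrableOn_image_iff_integrableOn_abs_deriv_smul measurableSet_Ioi
    (fun x _ => hasDerivWithinAt_add_sq A x _) (injOn_add_sq_Ioi A)]

lemma integral_Ioi_eq_comp_add_sq (A : ℝ) (g : ℝ → E) :
    ∫ h in Set.Ioi A, g h = ∫ y in Set.Ioi 0, |2 * y| • g (A + y ^ 2) := by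
  rw [← image_add_sq_Ioi A, integral_image_eq_integral_abs_deriv_smul measurableSet_Ioi
    (fun x _ => hasDerivWithinAt_add_sq A x _) (injOn_add_sq_Ioi A)]

lemma integral_eq_two_smul_integral_Ioi_of_even {F : ℝ → E} (heven : ∀ y, F (-y) = F y)
    (hF : Integrable F) : ∫ y, F y = (2 : ℝ) • ∫ y in Set.Ioi 0, F y := by
  have hreflect := integral_comp_neg_Ioi 0 F
  simp_rw [heven, neg_zero] at hreflect
  rw [← intervalIntegral.integral_Iic_add_Ioi (b := 0) hF.integrableOn hF.integrableOn, hreflect,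
    two_smul]

end AddSq

lemma eqOn_abs_smul_cexp_mul_rhoc {A : ℝ} (hA : 0 ≤ A) (s : ℂ) :
    Set.EqOn
      (fun y : ℝ => |2 * y| • (Complex.exp (-s * (A + y ^ 2 : ℝ)) * (rhoc A (A + y ^ 2) : ℂ)))
      (fun y => 2 * √2 * Complex.exp (-(A * s)) * (Complex.exp (-s * y ^ 2) * coshDiff A y))
      (Set.Ioi 0) := by
  intro y (hy : 0 < y)
  have hy' : (y : ℂ) ≠ 0 := Complex.ofReal_ne_zero.mpr hy.ne'
  have hexp : Complex.exp (-s * (A + y ^ 2 : ℝ)) =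
      Complex.exp (-(A * s)) * Complex.exp (-s * y ^ 2) := by
    rw [← Complex.exp_add]
    congr 1
    push_cast
    ring
  beta_reduce
  rw [abs_of_pos (by positivity), Complex.real_smul, rhoc_eq_coshDiff hA, add_sub_cancel_left,
    sqrt_sq hy.le, hexp]
  push_cast
  field_simp

lemma mul_rhoc_of_notMem_Ioi {A h : ℝ} (g : ℝ → ℂ) (hh : h ∉ Set.Ioi A) :
    g h * (rhoc A h : ℂ) = 0 := by
  rw [rhoc_of_le (not_lt.mp hh), Complex.ofReal_zero, mul_zero]

lemma integrable_cexp_mul_rhoc {A : ℝ} (hA : 0 ≤ A) {s : ℂ} (hs : 0 < s.re) :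
    Integrable fun h : ℝ => Complex.exp (-s * h) * (rhoc A h : ℂ) := by
  rw [← integrableOn_iff_integrable_of_support_subset (s := Set.Ioi A) (fun h => not_imp_comm.mp
      (mul_rhoc_of_notMem_Ioi fun h => Complex.exp (-s * h))),
    integrableOn_Ioi_iff_comp_add_sq,
    integrableOn_congr_fun (eqOn_abs_smul_cexp_mul_rhoc hA s) measurableSet_Ioi]
  exact (integrable_cexp_neg_mul_sq_mul_coshDiff A hs).integrableOn.const_mul _

lemma cpow_one_half_modularDual {s : ℂ} (hs : s ≠ 0) :
    modularDual s ^ ((1 : ℂ) / 2) = √(4 * π) * (π / s) ^ ((1 : ℂ) / 2) := by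
  have hπ : (π : ℂ) ≠ 0 := Complex.ofReal_ne_zero.mpr pi_ne_zero
  rw [← ofReal_mul_cpow_one_half (by positivity) (div_ne_zero hπ hs), modularDual]
  congr 1
  push_cast
  ring

lemma inv_sqrt_two_pi_mul_slowFactor (A : ℝ) {s : ℂ} (hs : s ≠ 0) :
    ((√(2 * π))⁻¹ : ℝ) * slowFactor A s 0 1 =
      √2 * Complex.exp (-(A * s)) * ((π / s) ^ ((1 : ℂ) / 2) *
        (Complex.exp (A * modularDual s) * (1 - Complex.exp (-modularDual s)))) := by
  have hconst : √2 = (√(2 * π))⁻¹ * √(4 * π) := by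
    rw [show (4 : ℝ) * π = 2 * (2 * π) by ring, sqrt_mul zero_le_two (2 * π)]
    field_simp
  rw [slowFactor, sub_zero, mul_one, ← modularDual, cpow_one_half_modularDual hs, hconst]
  push_cast
  ring

theorem integral_cexp_mul_rhoc {A : ℝ} (hA : 0 ≤ A) {s : ℂ} (hs : 0 < s.re) :
    ∫ h : ℝ, Complex.exp (-s * h) * (rhoc A h : ℂ) =
      ((√(2 * π))⁻¹ : ℝ) * slowFactor A s 0 1 := by
  have heven (y : ℝ) : Complex.exp (-s * (-y : ℝ) ^ 2) * coshDiff A (-y) =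
      Complex.exp (-s * y ^ 2) * coshDiff A y := by
    rw [coshDiff_neg, Complex.ofReal_neg, neg_sq]
  have hhalf := integral_eq_two_smul_integral_Ioi_of_even heven
    (integrable_cexp_neg_mul_sq_mul_coshDiff A hs)
  rw [integral_cexp_neg_mul_sq_mul_coshDiff hA hs] at hhalf
  rw [← setIntegral_eq_integral_of_forall_compl_eq_zero (fun h =>
      mul_rhoc_of_notMem_Ioi fun h => Complex.exp (-s * h)), integral_Ioi_eq_comp_add_sq,
    setIntegral_congr_fun measurableSet_Ioi (eqOn_abs_smul_cexp_mul_rhoc hA s), integral_const_mul,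
    inv_sqrt_two_pi_mul_slowFactor A (ne_zero_of_re_pos hs), hhalf, Complex.real_smul]
  push_cast
  ring

/-! ### The limiting density -/

/-- The density `e^{-2h} ρ_c(h)`, whose Fourier transform is `limitTransform A`. -/
def tiltedDensity (A h : ℝ) : ℝ := exp (-2 * h) * rhoc A h

lemma continuous_tiltedDensity {A : ℝ} (hA : 0 ≤ A) : Continuous (tiltedDensity A) :=
  (by fun_prop : Continuous fun h : ℝ => exp (-2 * h)).mul (continuous_rhoc hA)

lemma tiltedDensity_nonneg {A : ℝ} (hA : 0 ≤ A) (h : ℝ) : 0 ≤ tiltedDensity A h :=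
  mul_nonneg (exp_pos _).le (rhoc_nonneg hA h)

lemma integrable_tiltedDensity {A : ℝ} (hA : 0 ≤ A) : Integrable (tiltedDensity A) := by
  refine (integrable_cexp_mul_rhoc hA (s := 2) (by simp)).norm.congr (ae_of_all _ fun h => ?_)
  simp [tiltedDensity, Complex.norm_exp, abs_of_nonneg (rhoc_nonneg hA h)]

lemma limitTransform_eq_integral {A : ℝ} (hA : 0 ≤ A) (w : ℝ) :
    limitTransform A w = ∫ h : ℝ, Complex.exp (w * h * Complex.I) * tiltedDensity A h := by
  rw [limitTransform, ← integral_cexp_mul_rhoc hA (by simp)]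
  congr 1
  ext h
  rw [tiltedDensity, Complex.ofReal_mul, Complex.ofReal_exp, ← mul_assoc, ← Complex.exp_add,
    laplaceLine]
  congr 2
  push_cast
  ring

lemma continuous_limitTransform {A : ℝ} (hA : 0 ≤ A) : Continuous (limitTransform A) := by
  rw [funext (limitTransform_eq_integral hA)]
  refine continuous_of_dominated (bound := tiltedDensity A)
    (fun w => ((by fun_prop : Continuous fun h : ℝ => Complex.exp (w * h * Complex.I)).mul
      (Complex.continuous_ofReal.comp (continuous_tiltedDensity hA))).aestronglyMeasurable)
    (fun w => ae_of_all _ fun h => ?_) (integrable_tiltedDensity hA)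
    (ae_of_all _ fun h => by fun_prop)
  simp [Complex.norm_exp, abs_of_nonneg (tiltedDensity_nonneg hA h)]

lemma integrable_limitTransform {A : ℝ} (hA : 0 ≤ A) : Integrable (limitTransform A) := by
  obtain ⟨K, -, hbound⟩ := exists_norm_limitTransform_le hA
  exact ((integrable_one_add_abs_rpow_neg (k := 3 / 2) (by norm_num)).const_mul K).mono'
    (continuous_limitTransform hA).aestronglyMeasurable (ae_of_all _ hbound)

/-! ### Counting in windows -/

/-- The measure `e^{-2h} dμ(h)`, finite for each measure of a spectrum; its characteristic function
is the Laplace transform of `μ` along `laplaceLine`. -/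
def tiltedMeasure (μ : Measure ℝ) : Measure ℝ :=
  μ.withDensity fun h => ENNReal.ofReal (exp (-2 * h))

lemma charFun_tiltedMeasure (μ : Measure ℝ) (w : ℝ) :
    charFun (tiltedMeasure μ) w = laplaceTransform μ (laplaceLine w) := by
  rw [charFun_apply_real, tiltedMeasure,
    integral_withDensity_ofReal _ (by fun_prop) fun _ => (exp_pos _).le, laplaceTransform]
  congr 1
  ext h
  rw [Complex.real_smul, Complex.ofReal_exp, ← Complex.exp_add, laplaceLine]
  congr 1
  push_cast
  ring

lemma setIntegral_exp_tiltedMeasure (μ : Measure ℝ) {S : Set ℝ} (hS : MeasurableSet S) :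
    ∫ h in S, exp (2 * h) ∂tiltedMeasure μ = (μ S).toReal := by
  have hcancel (h : ℝ) : exp (-2 * h) • exp (2 * h) = 1 := by
    rw [smul_eq_mul, ← exp_add, neg_mul, neg_add_cancel, exp_zero]
  rw [tiltedMeasure,
    setIntegral_withDensity_ofReal _ (by fun_prop) (fun _ => (exp_pos _).le) _ hS]
  simp only [hcancel, setIntegral_one_eq_measureReal, Measure.real]

lemma exp_mul_tiltedDensity (A h : ℝ) : exp (2 * h) * tiltedDensity A h = rhoc A h := by
  rw [tiltedDensity, ← mul_assoc, ← exp_add, neg_mul, add_neg_cancel, exp_zero, one_mul]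

lemma cardyScale_div_rpow_neg {A : ℝ} (hA : 0 ≤ A) (γ : ℝ) {n : ℕ} (hn : 0 < n) :
    cardyScale A n / (n : ℝ) ^ (-γ) =
      √2 * (n : ℝ) ^ (1 / 2 + γ) * exp (-(4 * π * √(A * n))) := by
  have hexponent : 2 * cardyRate A * √n = 4 * π * √(A * n) := by
    rw [cardyRate, sqrt_mul hA]
    ring
  rw [cardyScale, hexponent, rpow_add (by positivity), ← sqrt_eq_rpow, rpow_neg (by positivity),
    div_inv_eq_mul]
  ring

namespace IsSpectrum

variable {T A : ℝ} {ν : ℤ → Measure ℝ}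

lemma isFiniteMeasure_tiltedMeasure (hν : IsSpectrum T ν) (J : ℤ) :
    IsFiniteMeasure (tiltedMeasure (ν J)) := by
  have hexp (h : ℝ) : exp J * exp (-1 * h - 1 * (h + J)) = exp (-2 * h) := by
    rw [← exp_add]
    ring_nf
  have hint := (hν.integrable_exp one_pos one_pos J).const_mul (exp J)
  simp only [hexp] at hint
  exact isFiniteMeasure_withDensity_ofReal hint.2

theorem tendsto_cardyScale_mul_window (hν : IsSpectrum T ν) (hmod : ModularInvariant A ν)
    (hA : 0 < A) (hT : 0 < T) {γ : ℝ} (hγ : 0 ≤ γ) (hγ' : γ < 1 / 4) {ε : ℝ}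
    (hε : Tendsto (fun n : ℕ => (n : ℝ) ^ (-γ)) atTop (𝓝 ε)) (x : ℝ) {δ : ℝ} (hδ : 0 < δ) :
    Tendsto (fun n : ℕ => cardyScale A n / (n : ℝ) ^ (-γ) *
        (ν n (Set.Ioo (x - δ * (n : ℝ) ^ (-γ)) (x + δ * (n : ℝ) ^ (-γ)))).toReal)
      atTop (𝓝 (∫ y in -δ..δ, rhoc A (x + ε * y))) := by
  have hfin (n : ℕ) : IsFiniteMeasure (tiltedMeasure (ν n)) := hν.isFiniteMeasure_tiltedMeasure n
  have hpos : ∀ᶠ n : ℕ in atTop, 0 < (n : ℝ) ^ (-γ) :=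
    (eventually_gt_atTop 0).mono fun n hn => rpow_pos_of_pos (Nat.cast_pos.mpr hn) _
  have htransform (n : ℕ) (w : ℝ) :
      cardyScale A n * charFun (tiltedMeasure (ν n)) w = cardyTransform A ν n w := by
    rw [charFun_tiltedMeasure, cardyTransform]
  have hwindow := tendsto_setIntegral_window (ρ := fun n : ℕ => tiltedMeasure (ν n))
    (cardyScale_nonneg A ·) hpos hε (continuous_tiltedDensity hA.le) (tiltedDensity_nonneg hA.le)
    (integrable_tiltedDensity hA.le) (limitTransform_eq_integral hA.le)
    (integrable_limitTransform hA.le)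
    (by simpa only [htransform] using hν.tendsto_cardyTransform hmod hA hT)
    (by simpa only [htransform] using
      hν.exists_integrable_gaussian_mul_norm_cardyTransform_le hmod hA hT hγ hγ')
    (ψ := fun h => exp (2 * h)) (by fun_prop) x hδ
  simpa only [setIntegral_exp_tiltedMeasure _ measurableSet_Ioo, exp_mul_tiltedDensity]
    using hwindow

end IsSpectrum

/-- Corollary (Cardy counting in shrinking windows): the number of spin-`J` states with
`h ∈ (h* - δJ^(-γ), h* + δJ^(-γ))` has the universal Cardy asymptotics. -/
theorem cardy_counting
    (A Tgap : ℝ) (hA : 0 < A) (hTgap : 0 < Tgap)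
    (ν : ℤ → Measure ℝ) (hspec : IsSpectrum Tgap ν) (hmod : ModularInvariant A ν)
    (δ γ hstar : ℝ) (hδ : 0 < δ) (hγ : 0 ≤ γ) (hγ' : γ < 1 / 4) (hhstar : 0 < hstar) :
    Tendsto
      (fun J : ℤ =>
        Real.sqrt 2 * (J : ℝ) ^ ((1 / 2 : ℝ) + γ) *
          Real.exp (-(4 * π * Real.sqrt (A * (J : ℝ)))) *
          ((ν J) (Set.Ioo (hstar - δ * (J : ℝ) ^ (-γ)) (hstar + δ * (J : ℝ) ^ (-γ)))).toReal)
      atTop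
      (𝓝 (if γ = 0 then ∫ h in (hstar - δ)..(hstar + δ), rhoc A h
           else 2 * δ * rhoc A hstar)) := by
  rw [← Nat.map_cast_int_atTop, tendsto_map'_iff]
  simp only [Function.comp_def, Int.cast_natCast]
  have hcount {ε : ℝ} (hε : Tendsto (fun n : ℕ => (n : ℝ) ^ (-γ)) atTop (𝓝 ε)) :=
    (hspec.tendsto_cardyScale_mul_window hmod hA hTgap hγ hγ' hε hstar hδ).congr' <|
      (eventually_gt_atTop 0).mono fun n hn => by rw [cardyScale_div_rpow_neg hA.le γ hn]
  split_ifs with hγ0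
  · have hlim := hcount (ε := 1) (by simp [hγ0])
    simpa only [one_mul, intervalIntegral.integral_comp_add_left (rhoc A), ← sub_eq_add_neg]
      using hlim
  · have hγpos : 0 < γ := lt_of_le_of_ne hγ (Ne.symm hγ0)
    have hlim := hcount ((tendsto_rpow_neg_atTop hγpos).comp tendsto_natCast_atTop_atTop)
    simpa only [zero_mul, add_zero, intervalIntegral.integral_const, sub_neg_eq_add, ← two_mul,
      smul_eq_mul] using hlim
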